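/- arXiv:1206.1531 — 2 statements merged into one kernel-verified Lean document; each statement's English description precedes it below -/
import Mathlib

section
/- Let k ≥ 1 be a fixed integer and let K_n, P_n be scalings with K_n ≥ 2 for all sufficiently large n. Define α_n by K_n²/P_n = (ln n + (k−1)·ln ln n + α_n)/n. Assume that either there exists ε > 0 with n·K_n²/P_n > ε for all sufficiently large n, or lim_{n→∞} n·K_n²/P_n = 0. If lim_{n→∞} α_n = −∞, then P[G(n,K_n,P_n) is k-connected] → 0 as n → ∞. -/
open MeasureTheory Filter Asymptotics
open scoped ENNReal

noncomputable section

/-- Key rings: `K`-element subsets of a key pool of size `P`. -/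
abbrev KeyRing (P K : ℕ) : Type := {s : Finset (Fin P) // s.card = K}

instance (P K : ℕ) : MeasurableSpace (KeyRing P K) := ⊤

/-- The uniform probability measure on key rings. -/
def uniformKeyMeasure (P K : ℕ) : Measure (KeyRing P K) :=
  (Fintype.card (KeyRing P K) : ℝ≥0∞)⁻¹ • (Measure.count : Measure (KeyRing P K))

/-- The Bernoulli measure with parameter `p` on `Bool`. -/
def bern (p : ℝ) : Measure Bool :=
  ENNReal.ofReal p • Measure.dirac true + ENNReal.ofReal (1 - p) • Measure.dirac false

/-- Sample space underlying `𝔾_on(n, K, P, p)`: independent key rings for the `n`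
nodes together with independent on/off channel states for each pair of nodes. -/
abbrev GonSpace (n K P : ℕ) : Type :=
  (Fin n → KeyRing P K) × (Sym2 (Fin n) → Bool)

/-- The probability measure of the model `𝔾_on(n, K, P, p)`: the key rings of the
`n` nodes are independent and uniform, and the channels are independent
Bernoulli(`p`) variables, independent of the key rings. -/
def gonMeasure (n K P : ℕ) (p : ℝ) : Measure (GonSpace n K P) :=
  (Measure.pi fun _ : Fin n => uniformKeyMeasure P K).prod
    (Measure.pi fun _ : Sym2 (Fin n) => bern p)

/-- The random graph `𝔾_on`: an edge is present iff the key rings intersect and the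
channel between the two nodes is on. -/
def gonGraph {n K P : ℕ} (ω : GonSpace n K P) : SimpleGraph (Fin n) where
  Adj i j := i ≠ j ∧ ((ω.1 i).1 ∩ (ω.1 j).1).Nonempty ∧ ω.2 s(i, j) = true
  symm := by
    refine ⟨?_⟩
    rintro i j ⟨h1, h2, h3⟩
    exact ⟨h1.symm, by rwa [Finset.inter_comm], by rwa [Sym2.eq_swap]⟩
  loopless := ⟨fun i h => h.1 rfl⟩

/-- The random key graph `G(n, K, P)`: an edge is present iff the key rings intersect. -/
def rkgGraph {n K P : ℕ} (ω : Fin n → KeyRing P K) : SimpleGraph (Fin n) where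
  Adj i j := i ≠ j ∧ ((ω i).1 ∩ (ω j).1).Nonempty
  symm := by
    refine ⟨?_⟩
    rintro i j ⟨h1, h2⟩
    exact ⟨h1.symm, by rwa [Finset.inter_comm]⟩
  loopless := ⟨fun i h => h.1 rfl⟩

/-- The probability measure of the random key graph model. -/
def rkgMeasure (n K P : ℕ) : Measure (Fin n → KeyRing P K) :=
  Measure.pi fun _ : Fin n => uniformKeyMeasure P K

/-- Degree of a vertex. -/
def gDeg {V : Type*} (G : SimpleGraph V) (v : V) : ℕ := Nat.card {w // G.Adj v w}

/-- Minimum vertex degree. -/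
def minDeg {V : Type*} (G : SimpleGraph V) : ℕ := sInf (Set.range (gDeg G))

/-- A graph is `k`-connected if it remains connected after the removal of any
`k - 1` of its vertices. -/
def KConnected {V : Type*} (G : SimpleGraph V) (k : ℕ) : Prop :=
  ∀ S : Finset V, S.card ≤ k - 1 → (G.induce ((S : Set V)ᶜ)).Connected

/-- Vertex connectivity: the least number of vertices whose deletion disconnects
the graph. -/
def vertexConn {V : Type*} (G : SimpleGraph V) : ℕ :=
  sInf {m | ∃ S : Finset V, S.card = m ∧ ¬ (G.induce ((S : Set V)ᶜ)).Connected}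

/-- `p_s`: the probability that two key rings share at least one key. -/
def psf (K P : ℕ) : ℝ :=
  if 2 * K ≤ P then 1 - (Nat.choose (P - K) K : ℝ) / (Nat.choose P K : ℝ) else 1

/-- `p_e = p · p_s`: the probability of an edge in `𝔾_on`. -/
def pef (K P : ℕ) (p : ℝ) : ℝ := p * psf K P

/-- The event `D_{x,ℓ}` that the node with index `x` has degree exactly `ℓ`. -/
def degEvent (n K P : ℕ) (x ℓ : ℕ) : Set (GonSpace n K P) :=
  {ω | ∃ hx : x < n, gDeg (gonGraph ω) ⟨x, hx⟩ = ℓ}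

/-- The event `E_{xy}` that the edge between the nodes with indices `x`, `y` is present. -/
def edgeEvent (n K P : ℕ) (x y : ℕ) : Set (GonSpace n K P) :=
  {ω | ∃ (hx : x < n) (hy : y < n), (gonGraph ω).Adj ⟨x, hx⟩ ⟨y, hy⟩}

/-- The event that the key rings of nodes `x` and `y` share exactly `u` keys. -/
def interCardEvent (n K P : ℕ) (x y u : ℕ) : Set (GonSpace n K P) :=
  {ω | ∃ (hx : x < n) (hy : y < n), ((ω.1 ⟨x, hx⟩).1 ∩ (ω.1 ⟨y, hy⟩).1).card = u}

/-- The event `K_{xy}` that the key rings of nodes `x` and `y` share at least one key. -/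
def keyShareEvent (n K P : ℕ) (x y : ℕ) : Set (GonSpace n K P) :=
  {ω | ∃ (hx : x < n) (hy : y < n), ((ω.1 ⟨x, hx⟩).1 ∩ (ω.1 ⟨y, hy⟩).1).Nonempty}

/-- `r_n = min(⌊P/K⌋, ⌊n/2⌋)`. -/
def rn (n K P : ℕ) : ℕ := min (P / K) (n / 2)

/-- The threshold array `J`. -/
def Jarr (n K P : ℕ) (ε lam mu : ℝ) (i : ℕ) : ℕ :=
  if i ≤ rn n K P then max ⌊(1 + ε) * (K : ℝ)⌋₊ ⌊lam * (K : ℝ) * (i : ℝ)⌋₊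
  else ⌊mu * (P : ℝ)⌋₊

/-- The event `𝓔(J)`: some set `T` of at least two nodes has a union of key rings of
size at most `J_{|T|}`. -/
def EJ (n K P : ℕ) (ε lam mu : ℝ) : Set (GonSpace n K P) :=
  {ω | ∃ T : Finset (Fin n), 2 ≤ T.card ∧
    (T.biUnion fun i => (ω.1 i).1).card ≤ Jarr n K P ε lam mu T.card}

/-! A vertex whose neighbourhood has at most `k - 1` elements obstructs `k`-connectivity, so it is
enough to find one. Count the pairs `(v, A)` in which `v` lies in the first half of the vertices and
`A`, a set of `i` vertices of the second half, is exactly the neighbourhood of `v`. Conditionally on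
the two key rings of `v` and `v'` the remaining rings are independent, and when those two are
disjoint the events of missing them are negatively correlated, because binomial coefficients are
log-concave. Hence the events for `(v, A)` and `(v', A')` are correlated by a factor of at most
`(1 - p) ^ -(2 * i + 1)`, where `p` is the edge probability, and Chebyshev's inequality bounds the
probability that there is no such pair by the reciprocal of their expected number plus an error that
vanishes as `p → 0`. With `p ≤ K ^ 2 / P` below the threshold, the expected number is large for
`i = 0` if `n * p ≤ log n / 2`, and for `i = k - 1` otherwise. -/

section SecondMoment

variable {Ω ι : Type*} [MeasurableSpace Ω] {μ : Measure Ω} {I : Finset ι} {E : ι → Set Ω}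

theorem memLp_sum_indicator_one [IsFiniteMeasure μ] (hE : ∀ i ∈ I, MeasurableSet (E i))
    (r : ℝ≥0∞) : MemLp (∑ i ∈ I, (E i).indicator (1 : Ω → ℝ)) r μ :=
  memLp_finsetSum' I fun i hi => memLp_indicator_const r (hE i hi) 1 (.inr (measure_ne_top μ _))

theorem integral_sum_indicator_one [IsFiniteMeasure μ] (hE : ∀ i ∈ I, MeasurableSet (E i)) :
    ∫ ω, (∑ i ∈ I, (E i).indicator (1 : Ω → ℝ)) ω ∂μ = ∑ i ∈ I, μ.real (E i) := by
  simp only [Finset.sum_apply]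
  rw [integral_finsetSum I fun i hi => (integrable_const 1).indicator (hE i hi)]
  exact Finset.sum_congr rfl fun i hi => integral_indicator_one (hE i hi)

theorem integral_sum_indicator_one_sq [IsFiniteMeasure μ] (hE : ∀ i ∈ I, MeasurableSet (E i)) :
    ∫ ω, ((∑ i ∈ I, (E i).indicator (1 : Ω → ℝ)) ^ 2) ω ∂μ =
      ∑ i ∈ I, ∑ i' ∈ I, μ.real (E i ∩ E i') := by
  have hsq : (∑ i ∈ I, (E i).indicator (1 : Ω → ℝ)) ^ 2 =
      ∑ x ∈ I ×ˢ I, (E x.1 ∩ E x.2).indicator (1 : Ω → ℝ) := by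
    simp only [sq, Finset.sum_mul_sum, Finset.sum_product, Set.inter_indicator_one]
  rw [hsq, integral_sum_indicator_one fun x hx =>
    (hE _ (Finset.mem_product.1 hx).1).inter (hE _ (Finset.mem_product.1 hx).2),
    Finset.sum_product]

theorem sum_measureReal_inter_le {c : ℝ} (hc : 0 ≤ c)
    (hpair : ∀ i ∈ I, ∀ i' ∈ I, i ≠ i' →
      μ.real (E i ∩ E i') ≤ c * (μ.real (E i) * μ.real (E i'))) :
    ∑ i ∈ I, ∑ i' ∈ I, μ.real (E i ∩ E i') ≤
      ∑ i ∈ I, μ.real (E i) + c * (∑ i ∈ I, μ.real (E i)) ^ 2 := by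
  classical
  have hterm : ∀ i ∈ I, ∀ i' ∈ I, μ.real (E i ∩ E i') ≤
      (if i = i' then μ.real (E i) else 0) + c * (μ.real (E i) * μ.real (E i')) := by
    intro i hi i' hi'
    split_ifs with h
    · subst h
      rw [Set.inter_self]
      exact le_add_of_nonneg_right (by positivity)
    · rw [zero_add]
      exact hpair i hi i' hi' h
  calc ∑ i ∈ I, ∑ i' ∈ I, μ.real (E i ∩ E i')
      ≤ ∑ i ∈ I, ∑ i' ∈ I,
          ((if i = i' then μ.real (E i) else 0) + c * (μ.real (E i) * μ.real (E i'))) :=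
        Finset.sum_le_sum fun i hi => Finset.sum_le_sum fun i' hi' => hterm i hi i' hi'
    _ = ∑ i ∈ I, μ.real (E i) + c * (∑ i ∈ I, μ.real (E i)) ^ 2 := by
        rw [sq, Finset.sum_mul_sum, Finset.mul_sum]
        simp +contextual only [Finset.sum_add_distrib, Finset.sum_ite_eq, if_true, Finset.mul_sum]

theorem measureReal_iInter_compl_le_of_pairwise [IsProbabilityMeasure μ] {c : ℝ}
    (hE : ∀ i ∈ I, MeasurableSet (E i)) (hc : 0 ≤ c)
    (hpair : ∀ i ∈ I, ∀ i' ∈ I, i ≠ i' →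
      μ.real (E i ∩ E i') ≤ c * (μ.real (E i) * μ.real (E i')))
    (hpos : 0 < ∑ i ∈ I, μ.real (E i)) :
    μ.real (⋂ i ∈ I, (E i)ᶜ) ≤ 1 / ∑ i ∈ I, μ.real (E i) + (c - 1) := by
  set X : Ω → ℝ := ∑ i ∈ I, (E i).indicator 1 with hX
  set m : ℝ := ∑ i ∈ I, μ.real (E i)
  have hXm : ∫ ω, X ω ∂μ = m := integral_sum_indicator_one hE
  have hXL2 : MemLp X 2 μ := memLp_sum_indicator_one hE 2
  have hvar : ProbabilityTheory.variance X μ ≤ m + (c - 1) * m ^ 2 := by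
    rw [ProbabilityTheory.variance_eq_sub hXL2, hXm, integral_sum_indicator_one_sq hE]
    linarith [sum_measureReal_inter_le hc hpair]
  have hsub : ⋂ i ∈ I, (E i)ᶜ ⊆ {ω | m ≤ |X ω - ∫ ω, X ω ∂μ|} := by
    intro ω hω
    have hX0 : X ω = 0 := by
      rw [hX, Finset.sum_apply]
      exact Finset.sum_eq_zero fun i hi => Set.indicator_of_notMem (Set.mem_iInter₂.1 hω i hi) _
    rw [Set.mem_ofPred_eq, hX0, hXm, zero_sub, abs_neg, abs_of_pos hpos]
  calc μ.real (⋂ i ∈ I, (E i)ᶜ)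
      ≤ ProbabilityTheory.variance X μ / m ^ 2 :=
        ENNReal.toReal_le_of_le_ofReal
          (div_nonneg (ProbabilityTheory.variance_nonneg _ _) (sq_nonneg m))
          ((measure_mono hsub).trans (ProbabilityTheory.meas_ge_le_variance_div_sq hXL2 hpos))
    _ ≤ (m + (c - 1) * m ^ 2) / m ^ 2 := by gcongr
    _ = 1 / m + (c - 1) := by field_simp

end SecondMoment

section PiMeasure

variable {V : Type*} [Fintype V] {X : V → Type*} [∀ v, MeasurableSpace (X v)]
  {μ : ∀ v, Measure (X v)} [∀ v, IsProbabilityMeasure (μ v)]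

theorem measureReal_pi_pi_finset (S : Finset V) (F : ∀ v, Set (X v)) :
    (Measure.pi μ).real ((S : Set V).pi F) = ∏ v ∈ S, (μ v).real (F v) := by
  simp only [Measure.real, Measure.pi_pi_finset, ENNReal.toReal_prod]

variable [DecidableEq V]

theorem lintegral_pi_eq_lintegral_lintegral_update {f : (∀ v, X v) → ℝ≥0∞}
    (hf : Measurable f) (v : V) :
    ∫⁻ ω, f ω ∂Measure.pi μ = ∫⁻ s, ∫⁻ ω, f (Function.update ω v s) ∂Measure.pi μ ∂μ v := by
  have hfup : Measurable fun x : (∀ v, X v) × X v => f (Function.update x.1 v x.2) :=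
    hf.comp measurable_update'
  calc ∫⁻ ω, f ω ∂Measure.pi μ
      = ∫⁻ ω, ∫⁻ s, f (Function.update ω v s) ∂μ v ∂Measure.pi μ :=
        lintegral_eq_of_lmarginal_eq {v} hf hfup.lintegral_prod_right' (by
          simp only [lmarginal_singleton, Function.update_idem, lintegral_const, measure_univ,
            mul_one])
    _ = ∫⁻ s, ∫⁻ ω, f (Function.update ω v s) ∂Measure.pi μ ∂μ v :=
        lintegral_lintegral_swap hfup.aemeasurable

theorem measure_pi_eq_lintegral_update {E : Set (∀ v, X v)}
    (hE : MeasurableSet E) (v : V) :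
    Measure.pi μ E = ∫⁻ s, Measure.pi μ {ω | Function.update ω v s ∈ E} ∂μ v := by
  rw [← lintegral_indicator_one hE,
    lintegral_pi_eq_lintegral_lintegral_update (measurable_one.indicator hE) v]
  refine lintegral_congr fun s => ?_
  exact lintegral_indicator_one (measurable_update_left hE)

theorem measureReal_pi_eq_integral_update {E : Set (∀ v, X v)}
    (hE : MeasurableSet E) (v : V) :
    (Measure.pi μ).real E = ∫ s, (Measure.pi μ).real {ω | Function.update ω v s ∈ E} ∂μ v := by
  have hmeas : Measurable fun s => Measure.pi μ {ω | Function.update ω v s ∈ E} :=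
    measurable_measure_prodMk_left ((measurable_update'.comp measurable_swap) hE)
  rw [Measure.real, measure_pi_eq_lintegral_update hE v]
  exact (integral_toReal hmeas.aemeasurable (.of_forall fun s => measure_lt_top _ _)).symm

end PiMeasure

theorem prod_ite_mem_eq_pow_mul_pow {V R : Type*} [DecidableEq V] [CommMonoid R] {S A : Finset V}
    (hA : A ⊆ S) (x y : R) :
    ∏ w ∈ S, (if w ∈ A then x else y) = x ^ A.card * y ^ (S.card - A.card) := by
  rw [Finset.prod_ite, Finset.prod_const, Finset.prod_const, Finset.filter_mem_eq_inter,
    Finset.inter_eq_right.2 hA, ← Finset.sdiff_eq_filter, Finset.card_sdiff_of_subset hA]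

section NegCorrelatedRel

variable {Q V : Type*}

/-- The event that, among the other elements of `V`, exactly those in `A` have a label related to
that of `v`. For a symmetric relation `T`, this says that `A` is the neighbourhood of `v` in the
graph in which vertices with related labels are adjacent. -/
def nbhdEvent (T : Q → Q → Prop) (v : V) (A : Finset V) : Set (V → Q) :=
  {ω | ∀ w, w ≠ v → (T (ω v) (ω w) ↔ w ∈ A)}

theorem disjoint_nbhdEvent {T : Q → Q → Prop} {v : V} {A A' : Finset V} (hv : v ∉ A) (hv' : v ∉ A')
    (hA : A ≠ A') : Disjoint (nbhdEvent T v A) (nbhdEvent T v A') := by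
  refine Set.disjoint_left.2 fun ω h h' => hA (Finset.ext fun w => ?_)
  by_cases hw : w = v
  · simp only [hw, hv, hv']
  · rw [← h w hw, ← h' w hw]

variable [MeasurableSpace Q]

/-- A relation for which a random point is related to each given point with the same probability
`p`, and the events of not being related to two given unrelated points are not positively
correlated. -/
structure NegCorrelatedRel (μ : Measure Q) (T : Q → Q → Prop) (p : ℝ) : Prop where
  measurableSet : MeasurableSet {x : Q × Q | T x.1 x.2}
  measureReal_rel : ∀ s, μ.real {t | T s t} = p
  measureReal_not_and_not_le : ∀ s s', ¬ T s s' →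
    μ.real {t | ¬ T s t ∧ ¬ T s' t} ≤ (1 - p) ^ 2

namespace NegCorrelatedRel

variable {μ : Measure Q} {T : Q → Q → Prop} {p : ℝ}

theorem measurableSet_rel (hT : NegCorrelatedRel μ T p) (s : Q) : MeasurableSet {t | T s t} :=
  measurable_prodMk_left hT.measurableSet

theorem measurableSet_nbhdEvent [Countable V] (hT : NegCorrelatedRel μ T p) (v : V) (A : Finset V) :
    MeasurableSet (nbhdEvent T v A) := by
  have hrel : ∀ w, MeasurableSet ((fun ω : V → Q => (ω v, ω w)) ⁻¹' {x | T x.1 x.2}) := fun w =>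
    ((measurable_pi_apply v).prodMk (measurable_pi_apply w)) hT.measurableSet
  rw [nbhdEvent, Set.ofPred_forall]
  exact .iInter fun w => .imp (.const _) (.iff (hrel w) (.const _))

variable [IsProbabilityMeasure μ]

theorem measureReal_not_rel (hT : NegCorrelatedRel μ T p) (s : Q) :
    μ.real {t | ¬ T s t} = 1 - p := by
  rw [← hT.measureReal_rel s, ← probReal_compl_eq_one_sub (hT.measurableSet_rel s)]
  rfl

theorem measureReal_and_le (hT : NegCorrelatedRel μ T p) {s s' : Q} (hs : ¬ T s s') :
    μ.real {t | T s t ∧ T s' t} ≤ p ^ 2 := by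
  have hor : {t | T s t ∨ T s' t} = {t | ¬ T s t ∧ ¬ T s' t}ᶜ := by
    ext t
    simp only [Set.mem_compl_iff, Set.mem_ofPred_eq, or_iff_not_and_not]
  have hmeas : MeasurableSet {t | ¬ T s t ∧ ¬ T s' t} :=
    (hT.measurableSet_rel s).compl.inter (hT.measurableSet_rel s').compl
  have hunion : μ.real {t | T s t ∨ T s' t} + μ.real {t | T s t ∧ T s' t} = p + p :=
    (measureReal_union_add_inter (hT.measurableSet_rel s')).trans
      (congrArg₂ _ (hT.measureReal_rel s) (hT.measureReal_rel s'))
  rw [hor, probReal_compl_eq_one_sub hmeas] at hunion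
  linarith [hT.measureReal_not_and_not_le s s' hs]

theorem measureReal_rel_iff (hT : NegCorrelatedRel μ T p) (s : Q) (B : Prop) [Decidable B] :
    μ.real {t | T s t ↔ B} = if B then p else 1 - p := by
  split_ifs with hB
  · simp only [hB, iff_true, hT.measureReal_rel]
  · simp only [hB, iff_false, hT.measureReal_not_rel]

/-- The factor `p / (1 - p)` in place of `p` absorbs the absence of independence when exactly one of
the two points is to be related to the random one. -/
theorem measureReal_rel_iff_and_rel_iff_le (hT : NegCorrelatedRel μ T p) (hp : p < 1) {s s' : Q}
    (hs : ¬ T s s') (B C : Prop) [Decidable B] [Decidable C] :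
    μ.real {t | (T s t ↔ B) ∧ (T s' t ↔ C)} ≤
      (if B then p / (1 - p) else 1 - p) * (if C then p / (1 - p) else 1 - p) := by
  have hq : 0 < 1 - p := sub_pos.2 hp
  have hp0 : 0 ≤ p := hT.measureReal_rel s ▸ measureReal_nonneg
  by_cases hB : B <;> by_cases hC : C <;> simp only [hB, hC, iff_true, iff_false, if_true, if_false]
  · have hle : p ≤ p / (1 - p) := le_div_self hp0 hq (by linarith)
    calc μ.real {t | T s t ∧ T s' t} ≤ p * p := by rw [← sq]; exact hT.measureReal_and_le hs
      _ ≤ p / (1 - p) * (p / (1 - p)) := by gcongr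
  · rw [div_mul_cancel₀ _ hq.ne', ← hT.measureReal_rel s]
    exact measureReal_mono fun t => And.left
  · rw [mul_div_cancel₀ _ hq.ne', ← hT.measureReal_rel s']
    exact measureReal_mono fun t => And.right
  · rw [← sq]
    exact hT.measureReal_not_and_not_le s s' hs

variable [Fintype V]

theorem measureReal_nbhdEvent (hT : NegCorrelatedRel μ T p) {v : V} {A : Finset V} (hv : v ∉ A) :
    (Measure.pi fun _ : V => μ).real (nbhdEvent T v A) =
      p ^ A.card * (1 - p) ^ (Fintype.card V - 1 - A.card) := by
  classical
  have hfibre : ∀ s, {ω | Function.update ω v s ∈ nbhdEvent T v A} =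
      ((Finset.univ.erase v : Finset V) : Set V).pi fun w => {t | T s t ↔ w ∈ A} := by
    intro s
    ext ω
    simp +contextual [nbhdEvent, Set.mem_pi]
  have hA : A ⊆ Finset.univ.erase v := fun w hw =>
    Finset.mem_erase.2 ⟨fun h => hv (h ▸ hw), Finset.mem_univ w⟩
  rw [measureReal_pi_eq_integral_update (hT.measurableSet_nbhdEvent v A) v]
  simp only [hfibre, measureReal_pi_pi_finset, hT.measureReal_rel_iff, integral_const,
    probReal_univ, one_smul]
  rw [prod_ite_mem_eq_pow_mul_pow hA, Finset.card_erase_of_mem (Finset.mem_univ v),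
    Finset.card_univ]

variable [DecidableEq V]

theorem measureReal_update_update_le (hT : NegCorrelatedRel μ T p) (hp : p < 1) {v v' : V}
    (hv : v ≠ v') {A A' : Finset V} (hA : A ⊆ {v, v'}ᶜ) (hA' : A' ⊆ {v, v'}ᶜ) (s s' : Q) :
    (Measure.pi fun _ : V => μ).real {ω | Function.update (Function.update ω v' s') v s ∈
        nbhdEvent T v A ∩ nbhdEvent T v' A'} ≤
      {s' | ¬ T s s'}.indicator (fun _ =>
        (p / (1 - p)) ^ A.card * (1 - p) ^ (Fintype.card V - 2 - A.card) *
          ((p / (1 - p)) ^ A'.card * (1 - p) ^ (Fintype.card V - 2 - A'.card))) s' := by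
  set E := {ω | Function.update (Function.update ω v' s') v s ∈ nbhdEvent T v A ∩ nbhdEvent T v' A'}
  have hv'A : v' ∉ A := fun h => by simpa using hA h
  have hE : ∀ ω ∈ E, ¬ T s s' := fun ω hω => by simpa [hv.symm, hv'A] using hω.1 v' hv.symm
  have hEpi : E ⊆ (({v, v'}ᶜ : Finset V) : Set V).pi
      fun w => {t | (T s t ↔ w ∈ A) ∧ (T s' t ↔ w ∈ A')} := by
    intro ω ⟨h, h'⟩ w hw
    obtain ⟨hwv', hwv⟩ : w ≠ v' ∧ w ≠ v := by simpa using hw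
    exact ⟨by simpa [hwv, hwv'] using h w hwv, by simpa [hwv, hwv', hv.symm] using h' w hwv'⟩
  have hcard : ({v, v'}ᶜ : Finset V).card = Fintype.card V - 2 := by
    rw [Finset.card_compl, Finset.card_pair hv]
  by_cases hs : T s s'
  · rw [Set.indicator_of_notMem (not_not.2 hs),
      Set.eq_empty_of_forall_notMem fun ω hω => hE ω hω hs, measureReal_empty]
  rw [Set.indicator_of_mem (show s' ∈ {s' | ¬ T s s'} from hs), ← hcard,
    ← prod_ite_mem_eq_pow_mul_pow hA, ← prod_ite_mem_eq_pow_mul_pow hA', ← Finset.prod_mul_distrib]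
  calc (Measure.pi fun _ : V => μ).real E
      ≤ ∏ w ∈ {v, v'}ᶜ, μ.real {t | (T s t ↔ w ∈ A) ∧ (T s' t ↔ w ∈ A')} :=
        (measureReal_mono hEpi).trans_eq (measureReal_pi_pi_finset _ _)
    _ ≤ _ := Finset.prod_le_prod (fun _ _ => measureReal_nonneg) fun w _ =>
        hT.measureReal_rel_iff_and_rel_iff_le hp hs (w ∈ A) (w ∈ A')

theorem measureReal_nbhdEvent_inter_le_mul (hT : NegCorrelatedRel μ T p) (hp : p < 1) {v v' : V}
    (hv : v ≠ v') {A A' : Finset V} (hA : A ⊆ {v, v'}ᶜ) (hA' : A' ⊆ {v, v'}ᶜ) :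
    (Measure.pi fun _ : V => μ).real (nbhdEvent T v A ∩ nbhdEvent T v' A') ≤
      (1 - p) * ((p / (1 - p)) ^ A.card * (1 - p) ^ (Fintype.card V - 2 - A.card) *
          ((p / (1 - p)) ^ A'.card * (1 - p) ^ (Fintype.card V - 2 - A'.card))) := by
  have hE : MeasurableSet (nbhdEvent T v A ∩ nbhdEvent T v' A') :=
    (hT.measurableSet_nbhdEvent v A).inter (hT.measurableSet_nbhdEvent v' A')
  set b := (p / (1 - p)) ^ A.card * (1 - p) ^ (Fintype.card V - 2 - A.card) *
          ((p / (1 - p)) ^ A'.card * (1 - p) ^ (Fintype.card V - 2 - A'.card))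
  have hfibre : ∀ s, (Measure.pi fun _ : V => μ).real
      {ω | Function.update ω v s ∈ nbhdEvent T v A ∩ nbhdEvent T v' A'} ≤ (1 - p) * b := by
    intro s
    have hmeas : MeasurableSet {s' | ¬ T s s'} := (hT.measurableSet_rel s).compl
    have hEs : MeasurableSet {ω | Function.update ω v s ∈ nbhdEvent T v A ∩ nbhdEvent T v' A'} :=
      measurable_update_left hE
    rw [measureReal_pi_eq_integral_update hEs v']
    calc _ ≤ ∫ s', {s' | ¬ T s s'}.indicator (fun _ => b) s' ∂μ :=
          integral_mono_of_nonneg (.of_forall fun _ => measureReal_nonneg)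
            ((integrable_const b).indicator hmeas)
            (.of_forall fun s' => hT.measureReal_update_update_le hp hv hA hA' s s')
      _ = (1 - p) * b := by
          rw [integral_indicator_const b hmeas, hT.measureReal_not_rel, smul_eq_mul]
  rw [measureReal_pi_eq_integral_update hE v]
  calc _ ≤ ∫ _, (1 - p) * b ∂μ :=
        integral_mono_of_nonneg (.of_forall fun _ => measureReal_nonneg) (integrable_const _)
          (.of_forall hfibre)
    _ = (1 - p) * b := by rw [integral_const, probReal_univ, one_smul]

theorem measureReal_nbhdEvent_inter_le (hT : NegCorrelatedRel μ T p) (hp : p < 1) {v v' : V}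
    (hv : v ≠ v') {A A' : Finset V} (hA : A ⊆ {v, v'}ᶜ) (hA' : A' ⊆ {v, v'}ᶜ) :
    (Measure.pi fun _ : V => μ).real (nbhdEvent T v A ∩ nbhdEvent T v' A') ≤
      1 / (1 - p) ^ (A.card + A'.card + 1) * ((Measure.pi fun _ : V => μ).real (nbhdEvent T v A) *
        (Measure.pi fun _ : V => μ).real (nbhdEvent T v' A')) := by
  have hq : 1 - p ≠ 0 := (sub_pos.2 hp).ne'
  have hcard : ∀ B : Finset V, B ⊆ {v, v'}ᶜ →
      Fintype.card V - 1 - B.card = Fintype.card V - 2 - B.card + 1 := by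
    intro B hB
    have hle := Finset.card_le_card hB
    have htwo := Finset.card_le_univ {v, v'}
    rw [Finset.card_compl, Finset.card_pair hv] at hle
    rw [Finset.card_pair hv] at htwo
    omega
  rw [hT.measureReal_nbhdEvent fun h => by simpa using hA h,
    hT.measureReal_nbhdEvent fun h => by simpa using hA' h, hcard A hA, hcard A' hA']
  refine (hT.measureReal_nbhdEvent_inter_le_mul hp hv hA hA').trans_eq ?_
  simp only [div_pow]
  field_simp
  ring

theorem measureReal_iInter_nbhdEvent_compl_le (hT : NegCorrelatedRel μ T p) (hp : p < 1)
    (U : Finset V) (j : ℕ)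
    (hpos : 0 < U.card * Uᶜ.card.choose j * (p ^ j * (1 - p) ^ (Fintype.card V - 1 - j))) :
    (Measure.pi fun _ : V => μ).real (⋂ i ∈ U ×ˢ Uᶜ.powersetCard j, (nbhdEvent T i.1 i.2)ᶜ) ≤
      1 / (U.card * Uᶜ.card.choose j * (p ^ j * (1 - p) ^ (Fintype.card V - 1 - j))) +
        (1 / (1 - p) ^ (2 * j + 1) - 1) := by
  have hp1 : 0 ≤ 1 - p := (sub_pos.2 hp).le
  have hI : ∀ i ∈ U ×ˢ Uᶜ.powersetCard j, i.1 ∈ U ∧ i.2 ⊆ Uᶜ ∧ i.2.card = j := fun i hi =>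
    ⟨(Finset.mem_product.1 hi).1, Finset.mem_powersetCard.1 (Finset.mem_product.1 hi).2⟩
  have hnot : ∀ v ∈ U, ∀ A ⊆ Uᶜ, v ∉ A := fun v hv A hA h => Finset.mem_compl.1 (hA h) hv
  have hsum : ∑ i ∈ U ×ˢ Uᶜ.powersetCard j, (Measure.pi fun _ : V => μ).real
      (nbhdEvent T i.1 i.2) =
      U.card * Uᶜ.card.choose j * (p ^ j * (1 - p) ^ (Fintype.card V - 1 - j)) := by
    rw [Finset.sum_congr rfl fun i hi => ?_, Finset.sum_const, Finset.card_product,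
      Finset.card_powersetCard, nsmul_eq_mul, Nat.cast_mul]
    obtain ⟨hv, hA, hj⟩ := hI i hi
    rw [hT.measureReal_nbhdEvent (hnot _ hv _ hA), hj]
  rw [← hsum] at hpos ⊢
  refine measureReal_iInter_compl_le_of_pairwise (fun i _ => hT.measurableSet_nbhdEvent i.1 i.2)
    (by positivity) (fun i hi i' hi' hne => ?_) hpos
  obtain ⟨hv, hA, hj⟩ := hI i hi
  obtain ⟨hv', hA', hj'⟩ := hI i' hi'
  by_cases hvv : i.1 = i'.1
  · have hAA : i.2 ≠ i'.2 := fun h => hne (Prod.ext hvv h)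
    rw [hvv, (disjoint_nbhdEvent (hvv ▸ hnot _ hv _ hA) (hnot _ hv' _ hA') hAA).inter_eq,
      measureReal_empty]
    positivity
  · have hcompl : Uᶜ ⊆ {i.1, i'.1}ᶜ := Finset.compl_subset_compl.2 (by
      simp only [Finset.insert_subset_iff, Finset.singleton_subset_iff, hv, hv', and_self])
    have := hT.measureReal_nbhdEvent_inter_le hp hvv (hA.trans hcompl) (hA'.trans hcompl)
    rwa [hj, hj', ← two_mul] at this

end NegCorrelatedRel

end NegCorrelatedRel

theorem choose_mul_choose_add_add_le (m a b k : ℕ) :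
    m.choose k * (m + a + b).choose k ≤ (m + a).choose k * (m + b).choose k := by
  have hterm : ∀ i, (m - i) * (m + a + b - i) ≤ (m + a - i) * (m + b - i) := by
    intro i
    rcases Nat.le_total m i with hi | hi
    · rw [Nat.sub_eq_zero_of_le hi, zero_mul]
      exact Nat.zero_le _
    · obtain ⟨d, rfl⟩ := Nat.exists_eq_add_of_le hi
      simp only [add_assoc, Nat.add_sub_cancel_left]
      nlinarith
  have hdesc : m.descFactorial k * (m + a + b).descFactorial k ≤
      (m + a).descFactorial k * (m + b).descFactorial k := by
    simp only [Nat.descFactorial_eq_prod_range, ← Finset.prod_mul_distrib]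
    exact Finset.prod_le_prod' fun i _ => hterm i
  simp only [Nat.descFactorial_eq_factorial_mul_choose] at hdesc
  rw [mul_mul_mul_comm, mul_mul_mul_comm _ ((m + a).choose k)] at hdesc
  exact Nat.le_of_mul_le_mul_left hdesc (by positivity)

section KeyRing

variable {P K : ℕ}

instance : DiscreteMeasurableSpace (KeyRing P K) := ⟨fun _ => trivial⟩

/-- The relation of having a common key, whose graph on independent uniform key rings is the random
key graph. -/
def ShareKey (s t : KeyRing P K) : Prop := (s.1 ∩ t.1).Nonempty

theorem not_shareKey_iff_subset_compl {s t : KeyRing P K} : ¬ ShareKey s t ↔ t.1 ⊆ s.1ᶜ := by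
  rw [ShareKey, Finset.not_nonempty_iff_eq_empty, ← Finset.disjoint_iff_inter_eq_empty,
    Finset.subset_compl_comm, Finset.subset_compl_iff_disjoint_right]

theorem uniformKeyMeasure_real_apply (S : Set (KeyRing P K)) :
    (uniformKeyMeasure P K).real S = S.ncard / P.choose K := by
  rw [uniformKeyMeasure, measureReal_ennreal_smul_apply, Measure.real,
    Measure.count_apply (MeasurableSet.of_discrete), Fintype.card_finset_len, Fintype.card_fin,
    ENNReal.toReal_inv, ENNReal.toReal_natCast, div_eq_inv_mul, ← (Set.toFinite S).cast_ncard_eq]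
  rfl

theorem isProbabilityMeasure_uniformKeyMeasure (hKP : K ≤ P) :
    IsProbabilityMeasure (uniformKeyMeasure P K) := by
  refine ⟨?_⟩
  have hcard : Fintype.card (KeyRing P K) ≠ 0 := by
    rw [Fintype.card_finset_len, Fintype.card_fin]
    exact (Nat.choose_pos hKP).ne'
  rw [uniformKeyMeasure, Measure.smul_apply, Measure.count_univ, ENat.card_eq_coe_fintype_card,
    smul_eq_mul]
  exact ENNReal.inv_mul_cancel (by exact_mod_cast hcard) (ENNReal.natCast_ne_top _)

theorem uniformKeyMeasure_real_subset (B : Finset (Fin P)) :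
    (uniformKeyMeasure P K).real {t | t.1 ⊆ B} = B.card.choose K / P.choose K := by
  have himage : Subtype.val '' {t : KeyRing P K | t.1 ⊆ B} = (B.powersetCard K : Set _) := by
    ext s
    simp only [Set.mem_image, Set.mem_ofPred_eq, Subtype.exists, exists_and_right, exists_eq_right,
      Finset.mem_coe, Finset.mem_powersetCard]
    tauto
  rw [uniformKeyMeasure_real_apply, ← Set.ncard_image_of_injective _ Subtype.val_injective, himage,
    Set.ncard_coe_finset, Finset.card_powersetCard]

theorem uniformKeyMeasure_real_shareKey (hKP : 2 * K ≤ P) (s : KeyRing P K) :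
    (uniformKeyMeasure P K).real {t | ShareKey s t} = psf K P := by
  have := isProbabilityMeasure_uniformKeyMeasure (show K ≤ P by omega)
  have hcompl : {t | ShareKey s t} = {t | t.1 ⊆ s.1ᶜ}ᶜ := by
    ext t
    rw [Set.mem_compl_iff, Set.mem_ofPred_eq, Set.mem_ofPred_eq, ← not_shareKey_iff_subset_compl,
      not_not]
  rw [hcompl, probReal_compl_eq_one_sub MeasurableSet.of_discrete, uniformKeyMeasure_real_subset,
    Finset.card_compl, Fintype.card_fin, s.2, psf, if_pos hKP]

theorem uniformKeyMeasure_real_not_shareKey_pair_le (hKP : 2 * K ≤ P) {s s' : KeyRing P K}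
    (hs : ¬ ShareKey s s') :
    (uniformKeyMeasure P K).real {t | ¬ ShareKey s t ∧ ¬ ShareKey s' t} ≤ (1 - psf K P) ^ 2 := by
  have hdisj : Disjoint s.1 s'.1 :=
    Finset.subset_compl_iff_disjoint_left.1 (not_shareKey_iff_subset_compl.1 hs)
  have hchoose : (0 : ℝ) < P.choose K := by
    exact_mod_cast Nat.choose_pos (show K ≤ P by omega)
  obtain ⟨m, rfl⟩ := Nat.exists_eq_add_of_le' hKP
  have hlog := choose_mul_choose_add_add_le m K K K
  simp only [not_shareKey_iff_subset_compl, ← Finset.subset_inter_iff, ← Finset.compl_union]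
  rw [uniformKeyMeasure_real_subset, Finset.card_compl, Fintype.card_fin,
    Finset.card_union_of_disjoint hdisj, s.2, s'.2, psf, if_pos hKP, sub_sub_cancel, div_pow,
    div_le_div_iff₀ hchoose (pow_pos hchoose 2), sq, ← mul_assoc, sq]
  refine mul_le_mul_of_nonneg_right ?_ hchoose.le
  rw [← two_mul, Nat.add_sub_cancel, show m + 2 * K - K = m + K by omega]
  rw [add_assoc, ← two_mul] at hlog
  exact_mod_cast hlog

theorem negCorrelatedRel_shareKey (hKP : 2 * K ≤ P) :
    NegCorrelatedRel (uniformKeyMeasure P K) ShareKey (psf K P) where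
  measurableSet := MeasurableSet.of_discrete
  measureReal_rel := uniformKeyMeasure_real_shareKey hKP
  measureReal_not_and_not_le _ _ := uniformKeyMeasure_real_not_shareKey_pair_le hKP

theorem uniformKeyMeasure_real_mem (hKP : K ≤ P) (x : Fin P) :
    (uniformKeyMeasure P K).real {t | x ∈ t.1} = K / P := by
  have := isProbabilityMeasure_uniformKeyMeasure hKP
  have hcompl : {t : KeyRing P K | x ∈ t.1} = {t | t.1 ⊆ {x}ᶜ}ᶜ := by
    ext t
    simp
  rw [hcompl, probReal_compl_eq_one_sub MeasurableSet.of_discrete, uniformKeyMeasure_real_subset,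
    Finset.card_compl, Fintype.card_fin, Finset.card_singleton]
  obtain ⟨R, rfl⟩ : ∃ R, P = R + 1 := Nat.exists_eq_add_one.2 x.pos
  have hchoose : (0 : ℝ) < (R + 1).choose K := by exact_mod_cast Nat.choose_pos hKP
  have hmul : (R.choose K : ℝ) * (R + 1) = (R + 1).choose K * (R + 1 - K) := by
    rw [← Nat.cast_add_one, ← Nat.cast_sub hKP]
    exact_mod_cast Nat.choose_mul_succ_eq R K
  rw [Nat.add_sub_cancel, Nat.cast_add_one]
  field_simp
  linarith

theorem uniformKeyMeasure_real_shareKey_le (hKP : K ≤ P) (s : KeyRing P K) :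
    (uniformKeyMeasure P K).real {t | ShareKey s t} ≤ K ^ 2 / P := by
  have hunion : {t | ShareKey s t} = ⋃ x ∈ s.1, {t : KeyRing P K | x ∈ t.1} := by
    ext t
    simp only [ShareKey, Finset.Nonempty, Finset.mem_inter, Set.mem_iUnion, Set.mem_ofPred_eq,
      exists_prop]
  calc (uniformKeyMeasure P K).real {t | ShareKey s t}
      ≤ ∑ x ∈ s.1, (uniformKeyMeasure P K).real {t | x ∈ t.1} := by
        rw [hunion]
        exact measureReal_biUnion_finset_le _ _
    _ = K ^ 2 / P := by
        rw [Finset.sum_congr rfl fun x _ => uniformKeyMeasure_real_mem hKP x, Finset.sum_const, s.2,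
          nsmul_eq_mul, sq, mul_div_assoc]

theorem psf_le_sq_div (hKP : K ≤ P) : psf K P ≤ (K : ℝ) ^ 2 / P := by
  by_cases h : 2 * K ≤ P
  · obtain ⟨s, -, hs⟩ := Finset.exists_subset_card_eq (n := K) (s := (Finset.univ : Finset (Fin P)))
      (by rwa [Finset.card_univ, Fintype.card_fin])
    rw [← uniformKeyMeasure_real_shareKey h ⟨s, hs⟩]
    exact uniformKeyMeasure_real_shareKey_le hKP _
  · have hP : 0 < P := by omega
    have hsq : P ≤ K ^ 2 := by nlinarith
    rw [psf, if_neg h, le_div_iff₀ (by exact_mod_cast hP), one_mul]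
    exact_mod_cast hsq

theorem psf_nonneg (K P : ℕ) : 0 ≤ psf K P := by
  rw [psf]
  split_ifs with h
  · exact sub_nonneg.2 (div_le_one_of_le₀
      (by exact_mod_cast Nat.choose_le_choose K (Nat.sub_le P K)) (Nat.cast_nonneg _))
  · exact zero_le_one

theorem two_mul_le_of_psf_lt_one (h : psf K P < 1) : 2 * K ≤ P := by
  by_contra hKP
  rw [psf, if_neg hKP] at h
  exact h.false

end KeyRing

theorem not_kConnected_of_forall_adj_mem {V : Type*} [Fintype V] {G : SimpleGraph V} {k : ℕ}
    {v : V} {A : Finset V} (hv : v ∉ A) (hA : A.card ≤ k - 1)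
    (hcard : A.card + 1 < Fintype.card V) (hadj : ∀ w, G.Adj v w → w ∈ A) :
    ¬ KConnected G k := by
  classical
  intro h
  obtain ⟨w, -, hw⟩ : ∃ w ∈ Finset.univ, w ∉ insert v A := by
    refine Finset.exists_mem_notMem_of_card_lt_card ?_
    rwa [Finset.card_univ, Finset.card_insert_of_notMem hv]
  rw [Finset.mem_insert, not_or] at hw
  have hnontrivial : Nontrivial ((A : Set V)ᶜ : Set V) :=
    ⟨⟨v, hv⟩, ⟨w, hw.2⟩, fun hvw => hw.1 (congrArg Subtype.val hvw).symm⟩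
  obtain ⟨z, hz⟩ := (h A hA).preconnected.exists_adj_of_nontrivial ⟨v, hv⟩
  exact z.2 (hadj _ hz)

/-- The expected number, in a random graph on `n` vertices with edge probability `p` whose edges at
each single vertex are independent, of pairs of a vertex of index less than `⌊n / 2⌋` and a set of
`j` vertices of larger index that is its neighbourhood. -/
def expectedLowDegree (n j : ℕ) (p : ℝ) : ℝ :=
  (n / 2 : ℕ) * (n - n / 2).choose j * (p ^ j * (1 - p) ^ (n - 1 - j))

theorem rkgMeasure_kConnected_le {n k j K P : ℕ} (hj : j ≤ k - 1) (hjn : j + 1 < n)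
    (hp : psf K P < 1) (hpos : 0 < expectedLowDegree n j (psf K P)) :
    rkgMeasure n K P {ω | KConnected (rkgGraph ω) k} ≤
      ENNReal.ofReal (1 / expectedLowDegree n j (psf K P) +
        (1 / (1 - psf K P) ^ (2 * j + 1) - 1)) := by
  have hKP : 2 * K ≤ P := two_mul_le_of_psf_lt_one hp
  have := isProbabilityMeasure_uniformKeyMeasure (show K ≤ P by omega)
  set U : Finset (Fin n) := {i | (i : ℕ) < n / 2} with hU
  have hUcard : U.card = n / 2 := by
    rw [hU, Fin.card_filter_val_lt, min_eq_right (Nat.div_le_self n 2)]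
  have hsub : {ω : Fin n → KeyRing P K | KConnected (rkgGraph ω) k} ⊆
      ⋂ i ∈ U ×ˢ Uᶜ.powersetCard j, (nbhdEvent ShareKey i.1 i.2)ᶜ := by
    refine fun ω hω => Set.mem_iInter₂.2 fun ⟨v, A⟩ hi hmem => ?_
    obtain ⟨hv, hA⟩ := Finset.mem_product.1 hi
    obtain ⟨hA, hAj⟩ := Finset.mem_powersetCard.1 hA
    refine not_kConnected_of_forall_adj_mem (fun h => Finset.mem_compl.1 (hA h) hv)
      (hAj.trans_le hj) (by rwa [hAj, Fintype.card_fin]) (fun w hw => ?_) hω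
    exact (hmem w hw.1.symm).1 hw.2
  have hbound := (negCorrelatedRel_shareKey hKP).measureReal_iInter_nbhdEvent_compl_le hp U j
  rw [Finset.card_compl, hUcard, Fintype.card_fin] at hbound
  rw [rkgMeasure, ← ofReal_measureReal (measure_ne_top _ _)]
  exact ENNReal.ofReal_le_ofReal ((measureReal_mono hsub).trans (hbound hpos))

theorem exp_neg_le_one_sub_pow {p : ℝ} (hp0 : 0 ≤ p) (hp : p ≤ 1 / 2) {n r : ℕ} (hr : r ≤ n)
    (hn : 2 * (n * p ^ 2) ≤ 1) : Real.exp (-1) * Real.exp (-(n * p)) ≤ (1 - p) ^ r := by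
  have hpos : 0 < 1 - p := by linarith
  have hbase : Real.exp (-(p + 2 * p ^ 2)) ≤ 1 - p := by
    have hinv : (1 - p)⁻¹ ≤ p + 2 * p ^ 2 + 1 := by
      rw [inv_le_iff_one_le_mul₀ hpos]
      nlinarith [mul_nonneg (sq_nonneg p) (by linarith : 0 ≤ 1 - 2 * p)]
    rw [Real.exp_neg, inv_le_comm₀ (Real.exp_pos _) hpos]
    exact hinv.trans (Real.add_one_le_exp _)
  calc Real.exp (-1) * Real.exp (-(n * p)) = Real.exp (-1 + -(n * p)) := (Real.exp_add _ _).symm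
    _ ≤ Real.exp (n * -(p + 2 * p ^ 2)) := Real.exp_le_exp.2 (by linarith)
    _ = Real.exp (-(p + 2 * p ^ 2)) ^ n := Real.exp_nat_mul _ _
    _ ≤ (1 - p) ^ n := by gcongr
    _ ≤ (1 - p) ^ r := pow_le_pow_of_le_one hpos.le (by linarith) hr

theorem mul_exp_neg_le_expectedLowDegree {n j : ℕ} {p : ℝ} (hp0 : 0 ≤ p) (hp : p ≤ 1 / 2)
    (hnp : 2 * (n * p ^ 2) ≤ 1) (hj : 4 * j + 4 ≤ n) :
    Real.exp (-1) / (4 ^ (j + 1) * j.factorial) * (n * ((n * p) ^ j * Real.exp (-(n * p)))) ≤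
      expectedLowDegree n j p := by
  have hhalf : (n : ℝ) / 4 ≤ (n / 2 : ℕ) := by
    have : (n : ℝ) ≤ 4 * (n / 2 : ℕ) := by exact_mod_cast (by omega : n ≤ 4 * (n / 2))
    linarith
  have hchoose : ((n : ℝ) / 4) ^ j / j.factorial ≤ (n - n / 2).choose j := by
    have : (n : ℝ) ≤ 4 * (n - n / 2 + 1 - j : ℕ) := by
      exact_mod_cast (by omega : n ≤ 4 * (n - n / 2 + 1 - j))
    refine le_trans ?_ (Nat.pow_le_choose j (n - n / 2))
    gcongr
    linarith
  have hpow := exp_neg_le_one_sub_pow hp0 hp (by omega : n - 1 - j ≤ n) hnp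
  calc _ = n / 4 * ((n / 4) ^ j / j.factorial) *
        (p ^ j * (Real.exp (-1) * Real.exp (-(n * p)))) := by
        rw [div_pow, mul_pow]
        field_simp
        ring
    _ ≤ expectedLowDegree n j p := by
        rw [expectedLowDegree]
        gcongr

theorem sqrt_le_mul_exp_neg {x y : ℝ} (hy : 0 < y) (hx : x ≤ Real.log y / 2) :
    √y ≤ y * Real.exp (-x) := by
  calc √y = Real.exp (Real.log y / 2) := by rw [Real.exp_half, Real.exp_log hy]
    _ ≤ Real.exp (Real.log y + -x) := Real.exp_le_exp.2 (by linarith)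
    _ = y * Real.exp (-x) := by rw [Real.exp_add, Real.exp_log hy]

theorem exp_neg_sub_log_div_le {x y : ℝ} (j : ℕ) (hy : 1 < y) (hx : Real.log y / 2 ≤ x) :
    Real.exp (-(x - (Real.log y + j * Real.log (Real.log y)))) / 2 ^ j ≤
      y * (x ^ j * Real.exp (-x)) := by
  have hlog : 0 < Real.log y := Real.log_pos hy
  calc _ = y * ((Real.log y / 2) ^ j * Real.exp (-x)) := by
        rw [show -(x - (Real.log y + j * Real.log (Real.log y))) =
          Real.log y + j * Real.log (Real.log y) + -x by ring, Real.exp_add, Real.exp_add,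
          Real.exp_nat_mul, Real.exp_log hlog, Real.exp_log (zero_lt_one.trans hy), div_pow]
        ring
    _ ≤ y * (x ^ j * Real.exp (-x)) := by gcongr

section Asymptotics

variable {p : ℕ → ℝ} {j : ℕ}

theorem isBigO_log_div_of_tendsto_atBot (hp : ∀ n, 0 ≤ p n)
    (h : Tendsto (fun n : ℕ => n * p n - (Real.log n + j * Real.log (Real.log n))) atTop atBot) :
    p =O[atTop] fun n : ℕ => Real.log n / n := by
  have hlog : Tendsto (fun n : ℕ => Real.log n) atTop atTop :=
    Real.tendsto_log_atTop.comp tendsto_natCast_atTop_atTop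
  have hloglog : (fun n : ℕ => j * Real.log (Real.log n)) =o[atTop] fun n : ℕ => Real.log n :=
    (Real.isLittleO_log_id_atTop.comp_tendsto hlog).const_mul_left j
  refine .of_bound 2 ?_
  filter_upwards [h.eventually_le_atBot 0, hloglog.bound one_pos, hlog.eventually_ge_atTop 0,
    eventually_gt_atTop 0] with n hn hjn hlogn hn0
  have hn0' : (0 : ℝ) < n := Nat.cast_pos.2 hn0
  rw [Real.norm_of_nonneg hlogn, one_mul] at hjn
  rw [Real.norm_of_nonneg (hp n), Real.norm_of_nonneg (by positivity), ← mul_div_assoc,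
    le_div_iff₀ hn0', mul_comm]
  linarith [le_of_abs_le hjn]

theorem tendsto_log_pow_div_natCast (r : ℕ) :
    Tendsto (fun n : ℕ => Real.log n ^ r / n) atTop (nhds 0) :=
  (Real.isLittleO_pow_log_id_atTop.tendsto_div_nhds_zero).comp tendsto_natCast_atTop_atTop

theorem tendsto_zero_of_isBigO_log_div (hO : p =O[atTop] fun n : ℕ => Real.log n / n) :
    Tendsto p atTop (nhds 0) :=
  hO.trans_tendsto (by simpa only [pow_one] using tendsto_log_pow_div_natCast 1)

theorem tendsto_natCast_mul_sq_zero_of_isBigO_log_div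
    (hO : p =O[atTop] fun n : ℕ => Real.log n / n) :
    Tendsto (fun n : ℕ => n * p n ^ 2) atTop (nhds 0) := by
  refine ((isBigO_refl (fun n : ℕ => (n : ℝ)) atTop).mul (hO.pow 2)).trans_tendsto
    ((tendsto_log_pow_div_natCast 2).congr fun n => ?_)
  rcases eq_or_ne (n : ℝ) 0 with hn | hn
  · rw [hn, div_zero, zero_mul]
  · field_simp

theorem exists_tendsto_expectedLowDegree_atTop (hp : ∀ n, 0 ≤ p n)
    (h : Tendsto (fun n : ℕ => n * p n - (Real.log n + j * Real.log (Real.log n))) atTop atBot) :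
    ∃ i : ℕ → ℕ, (∀ n, i n ≤ j) ∧
      Tendsto (fun n => expectedLowDegree n (i n) (p n)) atTop atTop := by
  have hO := isBigO_log_div_of_tendsto_atBot hp h
  have hhalf : ∀ᶠ n in atTop, p n ≤ 1 / 2 :=
    (tendsto_zero_of_isBigO_log_div hO).eventually_le_const one_half_pos
  have hsq : ∀ᶠ n : ℕ in atTop, n * p n ^ 2 ≤ 1 / 2 :=
    (tendsto_natCast_mul_sq_zero_of_isBigO_log_div hO).eventually_le_const one_half_pos
  set c : ℕ → ℝ := fun i => Real.exp (-1) / (4 ^ (i + 1) * i.factorial)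
  set a : ℕ → ℝ := fun n => n * p n - (Real.log n + j * Real.log (Real.log n))
  have hc : ∀ i, 0 < c i := fun i => by positivity
  have hsqrt : Tendsto (fun n : ℕ => c 0 * √n) atTop atTop :=
    (Real.tendsto_sqrt_atTop.comp tendsto_natCast_atTop_atTop).const_mul_atTop (hc 0)
  have hexp : Tendsto (fun n => c j * (Real.exp (-a n) / 2 ^ j)) atTop atTop :=
    ((Real.tendsto_exp_atTop.comp (tendsto_neg_atBot_atTop.comp h)).atTop_div_const
      (by positivity)).const_mul_atTop (hc j)
  refine ⟨fun n => if n * p n ≤ Real.log n / 2 then 0 else j,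
    fun n => by dsimp only; split_ifs <;> simp,
    tendsto_atTop_mono' atTop ?_ (tendsto_inf_atTop _ hsqrt hexp)⟩
  filter_upwards [hhalf, hsq, eventually_ge_atTop (4 * j + 4)] with n hpn hsqn hn
  have hn1 : (1 : ℝ) < n := by exact_mod_cast (by omega : 1 < n)
  split_ifs with hsmall
  · calc _ ≤ c 0 * √n := min_le_left _ _
      _ ≤ c 0 * (n * ((n * p n) ^ 0 * Real.exp (-(n * p n)))) := by
          rw [pow_zero, one_mul]
          gcongr
          exact sqrt_le_mul_exp_neg (by linarith) hsmall
      _ ≤ _ := mul_exp_neg_le_expectedLowDegree (hp n) hpn (by linarith) (by omega)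
  · calc _ ≤ c j * (Real.exp (-a n) / 2 ^ j) := min_le_right _ _
      _ ≤ c j * (n * ((n * p n) ^ j * Real.exp (-(n * p n)))) := by
          gcongr
          exact exp_neg_sub_log_div_le j hn1 (le_of_not_ge hsmall)
      _ ≤ _ := mul_exp_neg_le_expectedLowDegree (hp n) hpn (by linarith) hn

end Asymptotics

theorem natCast_mul_psf_sub_le {n K P : ℕ} (hn : 1 ≤ n) (hKP : K ≤ P) {x y : ℝ}
    (h : (K : ℝ) ^ 2 / P = (x + y) / n) : n * psf K P - x ≤ y := by
  have hn0 : (0 : ℝ) < n := by exact_mod_cast hn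
  have hle := psf_le_sq_div hKP
  rw [h, le_div_iff₀' hn0] at hle
  linarith

theorem rkg_zero_law_general (k : ℕ) (hk : 1 ≤ k) (K P : ℕ → ℕ)
    (h : Tendsto (fun n : ℕ => n * psf (K n) (P n) -
      (Real.log n + ((k : ℝ) - 1) * Real.log (Real.log n))) atTop atBot) :
    Tendsto (fun n : ℕ => rkgMeasure n (K n) (P n) {ω | KConnected (rkgGraph ω) k}) atTop
      (nhds 0) := by
  obtain ⟨j, rfl⟩ := Nat.exists_eq_add_of_le' hk
  simp only [Nat.cast_add_one, add_sub_cancel_right] at h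
  set p : ℕ → ℝ := fun n => psf (K n) (P n)
  have hp : ∀ n, 0 ≤ p n := fun n => psf_nonneg _ _
  have hp0 := tendsto_zero_of_isBigO_log_div (isBigO_log_div_of_tendsto_atBot hp h)
  obtain ⟨i, hij, hi⟩ := exists_tendsto_expectedLowDegree_atTop hp h
  have hcorr : Tendsto (fun n => 1 / (1 - p n) ^ (2 * j + 1) - 1) atTop (nhds 0) := by
    simpa using (((hp0.const_sub 1).pow (2 * j + 1)).inv₀ (by norm_num)).sub_const 1
  have hbound : Tendsto (fun n => ENNReal.ofReal (1 / expectedLowDegree n (i n) (p n) +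
      (1 / (1 - p n) ^ (2 * j + 1) - 1))) atTop (nhds 0) := by
    simpa using ENNReal.tendsto_ofReal (hi.inv_tendsto_atTop.add hcorr)
  refine tendsto_of_tendsto_of_tendsto_of_le_of_le' tendsto_const_nhds hbound
    (.of_forall fun _ => zero_le) ?_
  filter_upwards [hi.eventually_gt_atTop 0, hp0.eventually_lt_const one_pos,
    eventually_gt_atTop (j + 1)] with n hpos hp1 hn
  have hpow : (1 - p n) ^ (2 * j + 1) ≤ (1 - p n) ^ (2 * i n + 1) :=
    pow_le_pow_of_le_one (sub_pos.2 hp1).le (sub_le_self 1 (hp n)) (by linarith [hij n])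
  refine (rkgMeasure_kConnected_le (hij n) ((Nat.succ_le_succ (hij n)).trans_lt hn) hp1 hpos).trans
    (ENNReal.ofReal_le_ofReal ?_)
  gcongr

/-- zero-law for `k`-connectivity in random key graphs. -/
theorem rkg_zero_law
    (k : ℕ) (hk : 1 ≤ k) (K P : ℕ → ℕ)
    (hKP : ∀ n, K n ≤ P n)
    (hK2 : ∀ᶠ n : ℕ in atTop, 2 ≤ K n)
    (α : ℕ → ℝ)
    (hα : ∀ n, 1 ≤ n → (K n : ℝ) ^ 2 / (P n : ℝ) =
      (Real.log n + ((k : ℝ) - 1) * Real.log (Real.log n) + α n) / (n : ℝ))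
    (hdeg : (∃ ε : ℝ, 0 < ε ∧ ∀ᶠ n : ℕ in atTop,
        ε < (n : ℝ) * ((K n : ℝ) ^ 2 / (P n : ℝ))) ∨
      Tendsto (fun n : ℕ => (n : ℝ) * ((K n : ℝ) ^ 2 / (P n : ℝ))) atTop (nhds 0))
    (hαbot : Tendsto α atTop atBot) :
    Tendsto (fun n : ℕ => rkgMeasure n (K n) (P n)
        {ω | KConnected (rkgGraph ω) k}) atTop (nhds 0) := by
  refine rkg_zero_law_general k hk K P (tendsto_atBot_mono' atTop ?_ hαbot)
  filter_upwards [eventually_ge_atTop 1] with n hn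
  exact natCast_mul_psf_sub_le hn (hKP n) (hα n hn)
end
end

section
/- Let k ≥ 1 be a fixed integer. Suppose p_s = o(1), K_n ≥ 2 for all sufficiently large n, p_e = (ln n + (k−1)·ln ln n + α_n)/n with lim_{n→∞} α_n = −∞, and there exists ε > 0 with n·p_e > ε for all sufficiently large n. Then for any fixed positive integer ℓ and any two distinct nodes v_x, v_y of 𝔾_on(n,K_n,P_n,p_n): P[D_{x,ℓ} ∩ D_{y,ℓ} ∩ E_{xy}] = o(P[D_{x,ℓ} ∩ D_{y,ℓ} ∩ (E_{xy})^c]). -/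
open MeasureTheory Filter Asymptotics
open scoped ENNReal

noncomputable section

/-!
Condition on the key rings `X`, `Y` of the two nodes. Every other node then decides independently
whether it is adjacent to the first and to the second node, so the two degrees are counts of i.i.d.
trials: each has success probability `p_e`, and only the joint success probability `δ` depends on
`X` and `Y`. Up to factors bounded in terms of `ℓ` and of a lower bound on `n p_e`, the two counts
are small with probability `(n p_e) ^ (2 ℓ) * exp (n δ - 2 n p_e)`. If `X` and `Y` are disjoint,
`n δ` is at most of order `n p_e ^ 2`, hence bounded. If they share `u` keys, `n δ` grows by at most
`u n p ^ 2 K / P`. The ratio of the two probabilities is therefore of order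
`E[exp (u n p ^ 2 K / P); u ≥ 1]`, which vanishes: `u` is about Poisson with mean
`K ^ 2 / P ≈ p_s`, while `K ≥ 2` makes the exponent at most `ρ p log n` with `ρ < 1`, and either
`p log n ≤ 1` or `p_s ≤ n p_e log n / n`.
-/

theorem measureReal_prod_eq_integral {α β : Type*} [MeasurableSpace α] [MeasurableSpace β]
    (μ : Measure α) (ν : Measure β) [IsFiniteMeasure ν] {S : Set (α × β)} (hS : MeasurableSet S) :
    (μ.prod ν).real S = ∫ a, ν.real (Prod.mk a ⁻¹' S) ∂μ := by
  simp only [Measure.real, Measure.prod_apply hS]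
  exact (integral_toReal (measurable_measure_prodMk_left hS).aemeasurable
    (.of_forall fun _ => measure_lt_top _ _)).symm

theorem setIntegral_prod_eq_integral_setIntegral {α β : Type*} [MeasurableSpace α]
    [MeasurableSpace β] {μ : Measure α} {ν : Measure β} [SFinite μ] [SFinite ν] {S : Set (α × β)}
    (hS : MeasurableSet S) {f : α × β → ℝ} (hf : IntegrableOn f S (μ.prod ν)) :
    ∫ z in S, f z ∂μ.prod ν = ∫ a, ∫ b in Prod.mk a ⁻¹' S, f (a, b) ∂ν ∂μ := by
  rw [← integral_indicator hS, integral_prod _ (hf.integrable_indicator hS)]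
  refine integral_congr_ae (.of_forall fun a => ?_)
  exact integral_indicator (f := fun b => f (a, b)) (measurable_prodMk_left hS)

theorem choose_div_choose_le_pow {a b : ℕ} (h : a ≤ b) (k : ℕ) :
    (a.choose k : ℝ) / b.choose k ≤ ((a : ℝ) / b) ^ k := by
  have hfactor (i : ℕ) : ((a - i : ℕ) : ℝ) / (b - i : ℕ) ≤ a / b := by
    rcases le_or_gt b i with hi | hi
    · rw [Nat.sub_eq_zero_of_le hi]
      simp only [Nat.cast_zero, div_zero]
      positivity
    rw [div_le_div_iff₀ (by exact_mod_cast Nat.sub_pos_of_lt hi)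
      (by exact_mod_cast i.zero_le.trans_lt hi)]
    norm_cast
    rw [Nat.sub_mul, Nat.mul_sub]
    exact Nat.sub_le_sub_left (by grw [h, mul_comm]) _
  have hk : (k.factorial : ℝ) ≠ 0 := by exact_mod_cast k.factorial_ne_zero
  calc (a.choose k : ℝ) / b.choose k
      = ∏ i ∈ Finset.range k, ((a - i : ℕ) : ℝ) / (b - i : ℕ) := by
        rw [← mul_div_mul_left _ _ hk, Finset.prod_div_distrib]
        norm_cast
        simp only [← Nat.descFactorial_eq_factorial_mul_choose, Nat.descFactorial_eq_prod_range]
    _ ≤ ∏ _i ∈ Finset.range k, (a : ℝ) / b :=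
        Finset.prod_le_prod (fun _ _ => by positivity) fun i _ => hfactor i
    _ = ((a : ℝ) / b) ^ k := by rw [Finset.prod_const, Finset.card_range]

theorem exp_neg_sub_two_mul_sq_le_one_sub {x : ℝ} (hx : x ≤ 1 / 2) :
    Real.exp (-x - 2 * x ^ 2) ≤ 1 - x := by
  have hpos : 0 < 1 - x := by linarith
  rw [← Real.le_log_iff_exp_le hpos]
  refine le_trans ?_ (Real.one_sub_inv_le_log_of_pos hpos)
  have : (1 - x)⁻¹ ≤ 1 + x + 2 * x ^ 2 := by
    rw [inv_le_iff_one_le_mul₀ hpos]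
    nlinarith [mul_nonneg (sq_nonneg x) (by linarith : 0 ≤ 1 - 2 * x)]
  linarith

theorem half_pow_div_factorial_le_choose {n m r : ℕ} (h : n + 2 * r ≤ 2 * m + 2) :
    ((n : ℝ) / 2) ^ r / r.factorial ≤ m.choose r := by
  refine le_trans ?_ (Nat.pow_le_choose r m)
  gcongr
  rw [div_le_iff₀ two_pos]
  norm_cast
  omega

theorem measurePreserving_pi_comp_injective {ι E : Type*} [Fintype ι] [Fintype E]
    {β : E → Type*} [∀ a, MeasurableSpace (β a)] (μ : ∀ a, Measure (β a))
    [∀ a, IsProbabilityMeasure (μ a)] {e : ι → E} (he : Function.Injective e) :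
    MeasurePreserving (fun (f : ∀ a, β a) i => f (e i)) (Measure.pi μ)
      (Measure.pi fun i => μ (e i)) := by
  have hind : ProbabilityTheory.iIndepFun (fun a (f : ∀ a, β a) => f a) (Measure.pi μ) :=
    ProbabilityTheory.iIndepFun_pi (X := fun _ => id) fun _ => aemeasurable_id
  refine ⟨by fun_prop, ?_⟩
  rw [(ProbabilityTheory.iIndepFun_iff_map_fun_eq_pi_map
    fun _ => (measurable_pi_apply _).aemeasurable).mp (hind.precomp he)]
  exact congrArg Measure.pi (funext fun i => (measurePreserving_eval μ (e i)).map_eq)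

theorem measurePreserving_pi_pair_compl {ι Ω : Type*} [Fintype ι] [DecidableEq ι]
    [MeasurableSpace Ω] (μ : Measure Ω) [IsProbabilityMeasure μ] {x y : ι} (hxy : x ≠ y) :
    MeasurePreserving
      (fun f : ι → Ω => ((f x, f y), fun z : ({x, y}ᶜ : Finset ι) => f z))
      (Measure.pi fun _ => μ) ((μ.prod μ).prod (Measure.pi fun _ => μ)) := by
  let e : Fin 2 ⊕ ({x, y}ᶜ : Finset ι) → ι := Sum.elim ![x, y] Subtype.val
  have he : Function.Injective e := by
    refine Function.Injective.sumElim ?_ Subtype.val_injective ?_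
    · intro i j
      fin_cases i <;> fin_cases j <;> simp [hxy, hxy.symm]
    · intro i z
      have hz : x ≠ z ∧ y ≠ z := by simpa [eq_comm] using z.2
      fin_cases i
      exacts [hz.1, hz.2]
  exact ((measurePreserving_piFinTwo fun _ => μ).prod (.id _)).comp
    ((measurePreserving_sumPiEquivProdPi fun _ => μ).comp
      (measurePreserving_pi_comp_injective (fun _ => μ) he))

theorem measurePreserving_pi_sym2_star {ι Ω : Type*} [Fintype ι] [DecidableEq ι]
    [MeasurableSpace Ω] (μ : Measure Ω) [IsProbabilityMeasure μ] {x y : ι} (hxy : x ≠ y) :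
    MeasurePreserving
      (fun (c : Sym2 ι → Ω) (z : ({x, y}ᶜ : Finset ι)) => (c s(x, z), c s(y, z)))
      (Measure.pi fun _ => μ) (Measure.pi fun _ => μ.prod μ) := by
  let e : ({x, y}ᶜ : Finset ι) ⊕ ({x, y}ᶜ : Finset ι) → Sym2 ι :=
    Sum.elim (fun z => s(x, z)) fun z => s(y, z)
  have he : Function.Injective e := by
    refine Function.Injective.sumElim ?_ ?_ ?_
    · exact fun z z' h => Subtype.ext (Sym2.congr_right.mp h)
    · exact fun z z' h => Subtype.ext (Sym2.congr_right.mp h)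
    · intro z z' h
      have hz : x ≠ z ∧ y ≠ z := by simpa [eq_comm] using z.2
      rcases Sym2.eq_iff.mp h with h | h
      exacts [hxy h.1, hz.2 h.2.symm]
  exact (measurePreserving_arrowProdEquivProdArrow Ω Ω _ (fun _ => μ) fun _ => μ).symm.comp
    ((measurePreserving_sumPiEquivProdPi fun _ => μ).comp
      (measurePreserving_pi_comp_injective (fun _ => μ) he))

theorem prod_one_sub_mul_indicator {ι β : Type*} [Fintype ι] (f : ι → β) (W : Set β) (s : ℝ) :
    ∏ i, (1 - (1 - s) * W.indicator 1 (f i)) = s ^ {i | f i ∈ W}.ncard := by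
  classical
  rw [Set.ncard_eq_toFinset_card', Set.toFinset_ofPred, ← Finset.prod_const, Finset.prod_filter]
  refine Finset.prod_congr rfl fun i _ => ?_
  by_cases hi : f i ∈ W <;> simp [hi]

/-- The families `f` whose values lie in `U` exactly at the indices in `A`, and in `V` exactly at
those in `B`. -/
def hitCell {ι β : Type*} (U V : Set β) (A B : Finset ι) : Set (ι → β) :=
  {f | (∀ i, f i ∈ U ↔ i ∈ A) ∧ ∀ i, f i ∈ V ↔ i ∈ B}

section IidCounts

variable {ι β : Type*} {U V : Set β}

theorem hitCell_eq_univ_pi [DecidableEq ι] {A B : Finset ι} (hAB : Disjoint A B) :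
    hitCell U V A B =
      Set.univ.pi fun i => if i ∈ A then U \ V else if i ∈ B then V \ U else (U ∪ V)ᶜ := by
  ext f
  simp only [hitCell, Set.mem_ofPred_eq, ← forall_and, Set.mem_univ_pi]
  refine forall_congr' fun i => ?_
  have hi : i ∈ A → i ∉ B := fun h => Finset.disjoint_left.mp hAB h
  by_cases hA : i ∈ A <;> by_cases hB : i ∈ B <;> simp_all [and_comm]

theorem disjoint_hitCell {A B A' B' : Finset ι} (h : A ≠ A' ∨ B ≠ B') :
    Disjoint (hitCell U V A B) (hitCell U V A' B') := by
  refine Set.disjoint_left.mpr fun f hf hf' => ?_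
  rcases h with h | h
  · exact h (Finset.ext fun i => (hf.1 i).symm.trans (hf'.1 i))
  · exact h (Finset.ext fun i => (hf.2 i).symm.trans (hf'.2 i))

theorem ncard_eq_of_mem_hitCell {A B : Finset ι} {f : ι → β} (hf : f ∈ hitCell U V A B) :
    {i | f i ∈ U}.ncard = A.card ∧ {i | f i ∈ V}.ncard = B.card := by
  simp only [hf.1, hf.2, SetLike.setOfPred_mem_eq, Set.ncard_coe_finset, and_self]

variable [MeasurableSpace β]

theorem integral_one_sub_mul_indicator_mul (ν : Measure β) [IsProbabilityMeasure ν]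
    (hU : MeasurableSet U) (hV : MeasurableSet V) (t : ℝ) :
    ∫ b, (1 - t * U.indicator 1 b) * (1 - t * V.indicator 1 b) ∂ν =
      1 - t * (ν.real U + ν.real V) + t ^ 2 * ν.real (U ∩ V) := by
  have hint {W : Set β} (hW : MeasurableSet W) (c : ℝ) :
      Integrable (fun b => c * W.indicator 1 b) ν :=
    ((integrable_const 1).indicator hW).const_mul c
  have hexpand (b : β) : (1 - t * U.indicator 1 b) * (1 - t * V.indicator 1 b) =
      1 - (t * U.indicator 1 b + t * V.indicator 1 b - t ^ 2 * (U ∩ V).indicator 1 b) := by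
    rw [Set.inter_indicator_one, Pi.mul_apply]
    ring
  have hsum : Integrable (fun b => t * U.indicator 1 b + t * V.indicator 1 b) ν :=
    (hint hU t).add (hint hV t)
  have hUV := hint (hU.inter hV) (t ^ 2)
  have hdiff : Integrable (fun b => t * U.indicator 1 b + t * V.indicator 1 b -
      t ^ 2 * (U ∩ V).indicator 1 b) ν := hsum.sub hUV
  simp only [hexpand]
  rw [integral_sub (integrable_const 1) hdiff, integral_sub hsum hUV,
    integral_add (hint hU t) (hint hV t)]
  simp only [integral_const_mul, integral_indicator_one, hU, hV, hU.inter hV, integral_const,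
    probReal_univ, smul_eq_mul]
  ring

theorem pow_mul_measureReal_ncard_le_le [Fintype ι] (ν : Measure β) [IsProbabilityMeasure ν]
    (hU : MeasurableSet U) (hV : MeasurableSet V) {s : ℝ} (hs0 : 0 ≤ s) (hs1 : s ≤ 1) (k l : ℕ) :
    s ^ (k + l) * (Measure.pi fun _ : ι => ν).real
        {f | {i | f i ∈ U}.ncard ≤ k ∧ {i | f i ∈ V}.ncard ≤ l} ≤
      (1 - (1 - s) * (ν.real U + ν.real V) + (1 - s) ^ 2 * ν.real (U ∩ V)) ^ Fintype.card ι := by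
  let φ (b : β) : ℝ := (1 - (1 - s) * U.indicator 1 b) * (1 - (1 - s) * V.indicator 1 b)
  have hφ : Measurable φ :=
    (((measurable_one.indicator hU).const_mul _).const_sub _).mul
      (((measurable_one.indicator hV).const_mul _).const_sub _)
  have hprod (f : ι → β) :
      ∏ i, φ (f i) = s ^ ({i | f i ∈ U}.ncard + {i | f i ∈ V}.ncard) := by
    rw [Finset.prod_mul_distrib, prod_one_sub_mul_indicator, prod_one_sub_mul_indicator, pow_add]
  have hnonneg (f : ι → β) : 0 ≤ ∏ i, φ (f i) := by
    rw [hprod]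
    positivity
  have hint : Integrable (fun f : ι → β => ∏ i, φ (f i)) (Measure.pi fun _ => ν) := by
    refine .of_bound (Finset.measurable_fun_prod _ fun i _ =>
      hφ.comp (measurable_pi_apply i)).aestronglyMeasurable 1 (.of_forall fun f => ?_)
    rw [Real.norm_of_nonneg (hnonneg f), hprod]
    exact pow_le_one₀ hs0 hs1
  calc s ^ (k + l) * (Measure.pi fun _ : ι => ν).real
        {f | {i | f i ∈ U}.ncard ≤ k ∧ {i | f i ∈ V}.ncard ≤ l}
      ≤ s ^ (k + l) * (Measure.pi fun _ : ι => ν).real {f | s ^ (k + l) ≤ ∏ i, φ (f i)} := by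
        refine mul_le_mul_of_nonneg_left (measureReal_mono ?_) (by positivity)
        rintro f ⟨hk, hl⟩
        exact (pow_le_pow_of_le_one hs0 hs1 (add_le_add hk hl)).trans_eq (hprod f).symm
    _ ≤ ∫ f, ∏ i, φ (f i) ∂Measure.pi fun _ : ι => ν :=
        mul_meas_ge_le_integral_of_nonneg (.of_forall hnonneg) hint _
    _ = _ := by
        rw [integral_fintype_prod_eq_pow, integral_one_sub_mul_indicator_mul ν hU hV]

theorem measurableSet_hitCell [Finite ι] (hU : MeasurableSet U) (hV : MeasurableSet V)
    {A B : Finset ι} (hAB : Disjoint A B) : MeasurableSet (hitCell U V A B) := by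
  classical
  rw [hitCell_eq_univ_pi hAB]
  refine .univ_pi fun i => ?_
  split_ifs
  exacts [hU.diff hV, hV.diff hU, (hU.union hV).compl]

theorem measureReal_hitCell [Fintype ι] (ν : Measure β) [SigmaFinite ν] {A B : Finset ι}
    (hAB : Disjoint A B) :
    (Measure.pi fun _ : ι => ν).real (hitCell U V A B) =
      ν.real (U \ V) ^ A.card * ν.real (V \ U) ^ B.card *
        ν.real (U ∪ V)ᶜ ^ (Fintype.card ι - A.card - B.card) := by
  classical
  have hB : ({i | i ∉ A} : Finset ι).filter (· ∈ B) = B := by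
    ext i
    simpa using fun hi => Finset.disjoint_right.mp hAB hi
  have hrest : ({i | i ∉ A} : Finset ι).filter (· ∉ B) = Aᶜ \ B := by ext; simp
  have hsub : B ⊆ Aᶜ := fun i hi => Finset.mem_compl.mpr (Finset.disjoint_right.mp hAB hi)
  simp only [hitCell_eq_univ_pi hAB, Measure.real, Measure.pi_pi, ENNReal.toReal_prod,
    apply_ite ν, apply_ite ENNReal.toReal]
  rw [Finset.prod_ite, Finset.prod_ite, hB, hrest, Finset.filter_univ_mem]
  simp only [Finset.prod_const, Finset.card_sdiff_of_subset hsub, Finset.card_compl, mul_assoc]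

theorem choose_mul_le_measureReal_ncard_eq [Fintype ι] (ν : Measure β) [IsProbabilityMeasure ν]
    (hU : MeasurableSet U) (hV : MeasurableSet V) (k l : ℕ) :
    (Fintype.card ι).choose k * (Fintype.card ι - k).choose l * (ν.real (U \ V) ^ k *
        ν.real (V \ U) ^ l * ν.real (U ∪ V)ᶜ ^ (Fintype.card ι - k - l)) ≤
      (Measure.pi fun _ : ι => ν).real
        {f | {i | f i ∈ U}.ncard = k ∧ {i | f i ∈ V}.ncard = l} := by
  classical
  let I : Finset (Σ _ : Finset ι, Finset ι) :=
    (Finset.univ.powersetCard k).sigma fun A => Aᶜ.powersetCard l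
  have hI {q : Σ _ : Finset ι, Finset ι} :
      q ∈ I ↔ q.1.card = k ∧ q.2 ⊆ q.1ᶜ ∧ q.2.card = l := by
    simp [I, Finset.mem_powersetCard]
  have hdisj {q : Σ _ : Finset ι, Finset ι} (hq : q ∈ I) : Disjoint q.1 q.2 :=
    disjoint_compl_right.mono_right (hI.mp hq).2.1
  have hcard : (I.card : ℝ) = (Fintype.card ι).choose k * (Fintype.card ι - k).choose l := by
    rw [Finset.card_sigma, Finset.sum_congr rfl fun A hA => by
      rw [Finset.card_powersetCard, Finset.card_compl, (Finset.mem_powersetCard.mp hA).2]]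
    simp
  calc (Fintype.card ι).choose k * (Fintype.card ι - k).choose l * (ν.real (U \ V) ^ k *
        ν.real (V \ U) ^ l * ν.real (U ∪ V)ᶜ ^ (Fintype.card ι - k - l))
      = ∑ q ∈ I, (Measure.pi fun _ : ι => ν).real (hitCell U V q.1 q.2) := by
        rw [← hcard, ← nsmul_eq_mul, ← Finset.sum_const]
        refine Finset.sum_congr rfl fun q hq => ?_
        obtain ⟨hA, -, hB⟩ := hI.mp hq
        rw [measureReal_hitCell ν (hdisj hq), hA, hB]
    _ = (Measure.pi fun _ : ι => ν).real (⋃ q ∈ I, hitCell U V q.1 q.2) := by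
        refine (measureReal_biUnion_finset (fun q _ q' _ hqq' => disjoint_hitCell ?_)
          fun q hq => measurableSet_hitCell hU hV (hdisj hq)).symm
        contrapose! hqq'
        exact Sigma.ext hqq'.1 (heq_of_eq hqq'.2)
    _ ≤ _ := by
        refine measureReal_mono (Set.iUnion₂_subset fun q hq f hf => ?_)
        obtain ⟨hA, -, hB⟩ := hI.mp hq
        exact hA ▸ hB ▸ ncard_eq_of_mem_hitCell hf

end IidCounts

section IidCountBounds

variable {ι β : Type*} [Fintype ι] [MeasurableSpace β] (ν : Measure β) [IsProbabilityMeasure ν]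
  {U V : Set β}

theorem measureReal_ncard_le_le_le_exp (hU : MeasurableSet U) (hV : MeasurableSet V) (k l : ℕ) :
    (Measure.pi fun _ : ι => ν).real {f | {i | f i ∈ U}.ncard ≤ k ∧ {i | f i ∈ V}.ncard ≤ l} ≤
      (1 + Fintype.card ι * (ν.real U + ν.real V)) ^ (k + l) *
        Real.exp (1 - Fintype.card ι * (ν.real U + ν.real V) +
          Fintype.card ι * ν.real (U ∩ V)) := by
  set a : ℝ := Fintype.card ι * (ν.real U + ν.real V)
  have ha : 0 ≤ a := by positivity
  set s : ℝ := (1 + a)⁻¹ with hs_def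
  have hs0 : 0 < s := by positivity
  have hs1 : s ≤ 1 := inv_le_one_of_one_le₀ (by linarith)
  have hsa : s * (1 + a) = 1 := inv_mul_cancel₀ (by positivity)
  set c : ℝ := -(1 - s) * (ν.real U + ν.real V) + (1 - s) ^ 2 * ν.real (U ∩ V)
  have hbase : 1 - (1 - s) * (ν.real U + ν.real V) + (1 - s) ^ 2 * ν.real (U ∩ V) = c + 1 := by
    ring
  have hfactor (W : Set β) (b : β) : 0 ≤ 1 - (1 - s) * W.indicator 1 b := by
    by_cases hb : b ∈ W <;> simp [hb, hs0.le]
  have hbase_nonneg : 0 ≤ c + 1 := by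
    rw [← hbase, ← integral_one_sub_mul_indicator_mul ν hU hV]
    exact integral_nonneg fun b => mul_nonneg (hfactor U b) (hfactor V b)
  have hexponent : Fintype.card ι * c ≤ 1 - a + Fintype.card ι * ν.real (U ∩ V) := by
    have hsq : (1 - s) ^ 2 ≤ 1 := pow_le_one₀ (by linarith) (by linarith)
    have hinter : (1 - s) ^ 2 * (Fintype.card ι * ν.real (U ∩ V)) ≤
        1 * (Fintype.card ι * ν.real (U ∩ V)) := by gcongr
    linear_combination hinter + hsa + hs0.le
  have hmarkov := pow_mul_measureReal_ncard_le_le (ι := ι) ν hU hV hs0.le hs1 k l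
  rw [hbase, hs_def, inv_pow, inv_mul_le_iff₀ (by positivity)] at hmarkov
  refine hmarkov.trans ?_
  gcongr
  calc (c + 1) ^ Fintype.card ι ≤ Real.exp c ^ Fintype.card ι := by
        gcongr
        exact Real.add_one_le_exp c
    _ = Real.exp (Fintype.card ι * c) := (Real.exp_nat_mul _ _).symm
    _ ≤ _ := Real.exp_le_exp.mpr hexponent

theorem pow_div_mul_exp_le_measureReal_ncard_eq (hU : MeasurableSet U) (hV : MeasurableSet V)
    {q : ℝ} (hq0 : 0 ≤ q) (hq : q ≤ 1 / 4) (hqsq : Fintype.card ι * q ^ 2 ≤ 1)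
    (hUq : ν.real U ≤ q) (hVq : ν.real V ≤ q) (hUV : q / 2 ≤ ν.real (U \ V))
    (hVU : q / 2 ≤ ν.real (V \ U)) {ℓ : ℕ} (hℓ : 4 * ℓ ≤ Fintype.card ι) :
    (Fintype.card ι * q / 4) ^ (2 * ℓ) / (ℓ.factorial : ℝ) ^ 2 *
        Real.exp (-8 - 2 * (Fintype.card ι * q)) ≤
      (Measure.pi fun _ : ι => ν).real
        {f | {i | f i ∈ U}.ncard = ℓ ∧ {i | f i ∈ V}.ncard = ℓ} := by
  have hcompl : 1 - 2 * q ≤ ν.real (U ∪ V)ᶜ := by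
    rw [probReal_compl_eq_one_sub (hU.union hV)]
    linarith [measureReal_union_le (μ := ν) U V]
  have hexp : Real.exp (-8 - 2 * (Fintype.card ι * q)) ≤
      ν.real (U ∪ V)ᶜ ^ (Fintype.card ι - ℓ - ℓ) :=
    calc Real.exp (-8 - 2 * (Fintype.card ι * q))
        ≤ Real.exp (Fintype.card ι * (-(2 * q) - 2 * (2 * q) ^ 2)) :=
          Real.exp_le_exp.mpr (by linarith)
      _ = Real.exp (-(2 * q) - 2 * (2 * q) ^ 2) ^ Fintype.card ι := Real.exp_nat_mul _ _
      _ ≤ (1 - 2 * q) ^ Fintype.card ι := by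
          gcongr
          exact exp_neg_sub_two_mul_sq_le_one_sub (by linarith)
      _ ≤ (1 - 2 * q) ^ (Fintype.card ι - ℓ - ℓ) :=
          pow_le_pow_of_le_one (by linarith) (by linarith) (by omega)
      _ ≤ ν.real (U ∪ V)ᶜ ^ (Fintype.card ι - ℓ - ℓ) := by
          gcongr
          linarith
  refine le_trans ?_ (choose_mul_le_measureReal_ncard_eq ν hU hV ℓ ℓ)
  calc (Fintype.card ι * q / 4) ^ (2 * ℓ) / (ℓ.factorial : ℝ) ^ 2 *
        Real.exp (-8 - 2 * (Fintype.card ι * q))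
      = (Fintype.card ι / 2 : ℝ) ^ ℓ / ℓ.factorial * ((Fintype.card ι / 2 : ℝ) ^ ℓ / ℓ.factorial) *
          ((q / 2) ^ ℓ * (q / 2) ^ ℓ * Real.exp (-8 - 2 * (Fintype.card ι * q))) := by
        have hquarter : (Fintype.card ι * q / 4 : ℝ) = Fintype.card ι / 2 * (q / 2) := by ring
        rw [hquarter, mul_pow, two_mul, pow_add, pow_add]
        ring
    _ ≤ _ := by
        gcongr
        exacts [half_pow_div_factorial_le_choose (by omega),
          half_pow_div_factorial_le_choose (by omega)]

end IidCountBounds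

section KeyRings

variable {P K : ℕ}

theorem measureReal_uniformKeyMeasure_setOf (q : Finset (Fin P) → Prop) [DecidablePred q] :
    (uniformKeyMeasure P K).real {T | q T.1} =
      ((Finset.univ.powersetCard K).filter q).card / P.choose K := by
  have hcard : ({T : KeyRing P K | q T.1} : Finset _).card =
      ((Finset.univ.powersetCard K).filter q).card := by
    rw [← Finset.card_map (.subtype _)]
    congr 1
    ext s
    simp [and_comm]
  rw [uniformKeyMeasure, measureReal_ennreal_smul_apply, Measure.real,
    Measure.count_apply .of_discrete, ← Set.coe_fintypeCard]
  simp [← hcard, inv_mul_eq_div]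

theorem measureReal_uniformKeyMeasure_subset_le (hKP : K ≤ P) (A : Finset (Fin P)) :
    (uniformKeyMeasure P K).real {T | A ⊆ T.1} ≤ ((K : ℝ) / P) ^ A.card := by
  rw [measureReal_uniformKeyMeasure_setOf fun s => A ⊆ s]
  rcases lt_or_ge K A.card with hA | hA
  · rw [Finset.filter_false_of_mem fun s hs hAs => hA.not_ge <|
      (Finset.card_le_card hAs).trans_eq (Finset.mem_powersetCard.mp hs).2]
    simp only [Finset.card_empty, Nat.cast_zero, zero_div]
    positivity
  have hK : (P.choose K : ℝ) ≠ 0 := by exact_mod_cast (Nat.choose_pos hKP).ne'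
  have hP : (P.choose A.card : ℝ) ≠ 0 := by exact_mod_cast (Nat.choose_pos (hA.trans hKP)).ne'
  have hcount : (P.choose K * K.choose A.card : ℝ) =
      P.choose A.card * (P - A.card).choose (K - A.card) := by
    exact_mod_cast Nat.choose_mul hA
  rw [Finset.card_filter_powersetCard_subset _ _ _ (Finset.subset_univ _) hA, Finset.card_fin]
  calc ((P - A.card).choose (K - A.card) : ℝ) / P.choose K
      = K.choose A.card / P.choose A.card := by
        rw [div_eq_div_iff hK hP, mul_comm, ← hcount, mul_comm]
    _ ≤ ((K : ℝ) / P) ^ A.card := choose_div_choose_le_pow hKP _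

theorem psf_eq_one_sub (K P : ℕ) : psf K P = 1 - ((P - K).choose K : ℝ) / P.choose K := by
  unfold psf
  split_ifs with h
  · rfl
  · rw [Nat.choose_eq_zero_of_lt (by omega), Nat.cast_zero, zero_div, sub_zero]

theorem sq_div_le_psf_div (h : psf K P < 1) : (K : ℝ) ^ 2 / P ≤ psf K P / (1 - psf K P) := by
  have hKP : K ≤ P := by
    by_contra hPK
    rw [psf, if_neg (by omega)] at h
    exact h.false
  have hpos : 0 < 1 - psf K P := sub_pos.mpr h
  have hratio : ((P - K : ℕ) : ℝ) / P ≤ Real.exp (-(K / P)) := by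
    rcases P.eq_zero_or_pos with rfl | hP
    · simp
    rw [Nat.cast_sub hKP, sub_div, div_self (by positivity)]
    exact Real.one_sub_le_exp_neg _
  have hexp : 1 - psf K P ≤ (Real.exp (K ^ 2 / P))⁻¹ :=
    calc 1 - psf K P = ((P - K).choose K : ℝ) / P.choose K := by rw [psf_eq_one_sub, sub_sub_cancel]
      _ ≤ (((P - K : ℕ) : ℝ) / P) ^ K := choose_div_choose_le_pow (Nat.sub_le P K) K
      _ ≤ Real.exp (-(K / P)) ^ K := by gcongr
      _ = (Real.exp (K ^ 2 / P))⁻¹ := by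
        rw [← Real.exp_nat_mul, ← Real.exp_neg]
        ring_nf
  have hle : (K : ℝ) ^ 2 / P + 1 ≤ (1 - psf K P)⁻¹ :=
    (Real.add_one_le_exp _).trans ((le_inv_comm₀ hpos (Real.exp_pos _)).mp hexp)
  calc (K : ℝ) ^ 2 / P ≤ (1 - psf K P)⁻¹ - 1 := le_sub_right_of_add_le hle
    _ = psf K P / (1 - psf K P) := by field_simp; ring

theorem sq_div_le_four_thirds_mul_psf (h : psf K P ≤ 1 / 4) :
    (K : ℝ) ^ 2 / P ≤ 4 / 3 * psf K P := by
  refine (sq_div_le_psf_div (h.trans_lt (by norm_num))).trans ?_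
  rw [div_le_iff₀ (by linarith)]
  nlinarith [psf_nonneg K P]

theorem pef_nonneg (K P : ℕ) {p : ℝ} (hp0 : 0 ≤ p) : 0 ≤ pef K P p :=
  mul_nonneg hp0 (psf_nonneg K P)

/-- The key rings sharing a key with `X`. -/
def meets (X : KeyRing P K) : Set (KeyRing P K) := {T | (X.1 ∩ T.1).Nonempty}

theorem measureReal_meets (hKP : K ≤ P) (X : KeyRing P K) :
    (uniformKeyMeasure P K).real (meets X) = psf K P := by
  have := isProbabilityMeasure_uniformKeyMeasure hKP
  have hcompl : (meets X)ᶜ = {T | T.1 ⊆ X.1ᶜ} := by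
    ext T
    rw [Set.mem_compl_iff, meets, Set.mem_ofPred_eq, ← Finset.not_disjoint_iff_nonempty_inter,
      not_not, ← Finset.subset_compl_iff_disjoint_left, Set.mem_ofPred_eq]
  have hfilter : (Finset.univ.powersetCard K).filter (· ⊆ X.1ᶜ) = X.1ᶜ.powersetCard K := by
    ext s
    simp [Finset.mem_powersetCard, and_comm]
  rw [← sub_sub_cancel 1 ((uniformKeyMeasure P K).real (meets X)),
    ← probReal_compl_eq_one_sub .of_discrete, hcompl,
    measureReal_uniformKeyMeasure_setOf fun s => s ⊆ X.1ᶜ, hfilter, Finset.card_powersetCard,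
    Finset.card_compl, Fintype.card_fin, X.2, psf_eq_one_sub]

theorem measureReal_meets_inter_meets_le (hKP : K ≤ P) (X Y : KeyRing P K) :
    (uniformKeyMeasure P K).real (meets X ∩ meets Y) ≤
      ((K : ℝ) ^ 2 / P) ^ 2 + (X.1 ∩ Y.1).card * (K / P) := by
  have := isProbabilityMeasure_uniformKeyMeasure hKP
  have hsub : meets X ∩ meets Y ⊆ ⋃ ab ∈ X.1 ×ˢ Y.1, {T | {ab.1, ab.2} ⊆ T.1} := by
    rintro T ⟨⟨a, ha⟩, ⟨b, hb⟩⟩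
    simp only [Set.mem_iUnion]
    refine ⟨(a, b), ?_, ?_⟩ <;> simp_all [Finset.insert_subset_iff]
  have hpair (a b : Fin P) : (uniformKeyMeasure P K).real {T | {a, b} ⊆ T.1} ≤
      (K / P) ^ 2 + if a = b then (K / P : ℝ) else 0 := by
    refine (measureReal_uniformKeyMeasure_subset_le hKP {a, b}).trans ?_
    split_ifs with hab
    · simp only [hab, Finset.pair_eq_singleton, Finset.card_singleton, pow_one]
      exact le_add_of_nonneg_left (sq_nonneg _)
    · rw [Finset.card_pair hab, add_zero]
  calc (uniformKeyMeasure P K).real (meets X ∩ meets Y)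
      ≤ ∑ ab ∈ X.1 ×ˢ Y.1, (uniformKeyMeasure P K).real {T | {ab.1, ab.2} ⊆ T.1} :=
        (measureReal_mono hsub (measure_ne_top _ _)).trans (measureReal_biUnion_finset_le _ _)
    _ ≤ ∑ ab ∈ X.1 ×ˢ Y.1, ((K / P : ℝ) ^ 2 + if ab.1 = ab.2 then (K / P : ℝ) else 0) :=
        Finset.sum_le_sum fun ab _ => hpair ab.1 ab.2
    _ = ((K : ℝ) ^ 2 / P) ^ 2 + (X.1 ∩ Y.1).card * (K / P) := by
        rw [Finset.sum_add_distrib, Finset.sum_const, Finset.card_product, X.2, Y.2,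
          Finset.sum_product]
        simp only [Finset.sum_ite_eq, ← Finset.sum_filter, Finset.filter_mem_eq_inter,
          Finset.sum_const, nsmul_eq_mul]
        push_cast
        ring

theorem integral_one_add_pow_card_inter_le (hKP : K ≤ P) (X : KeyRing P K) {b : ℝ} (hb : 0 ≤ b) :
    ∫ T, (1 + b) ^ (X.1 ∩ T.1).card ∂uniformKeyMeasure P K ≤ Real.exp (b * (K ^ 2 / P)) := by
  have := isProbabilityMeasure_uniformKeyMeasure hKP
  have hexpand (T : KeyRing P K) : (1 + b) ^ (X.1 ∩ T.1).card =
      ∑ A ∈ X.1.powerset, b ^ A.card * Set.indicator {T | A ⊆ T.1} 1 T := by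
    simp only [Set.indicator_apply, Set.mem_ofPred_eq, Pi.one_apply, mul_ite, mul_one, mul_zero,
      ← Finset.sum_filter]
    rw [add_comm, ← Finset.sum_pow_mul_eq_add_pow]
    simp only [one_pow, mul_one]
    congr 1
    ext A
    rw [Finset.mem_powerset, Finset.subset_inter_iff, Finset.mem_filter, Finset.mem_powerset]
  simp only [hexpand]
  rw [integral_finsetSum _ fun _ _ => .of_finite]
  calc ∑ A ∈ X.1.powerset, ∫ T, b ^ A.card * Set.indicator {T | A ⊆ T.1} 1 T ∂uniformKeyMeasure P K
      ≤ ∑ A ∈ X.1.powerset, (b * (K / P)) ^ A.card := by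
        refine Finset.sum_le_sum fun A _ => ?_
        rw [integral_const_mul, integral_indicator_one .of_discrete, mul_pow]
        gcongr
        exact measureReal_uniformKeyMeasure_subset_le hKP A
    _ = (b * (K / P) + 1) ^ K := by
        simpa only [one_pow, mul_one, X.2] using
          Finset.sum_pow_mul_eq_add_pow (b * (K / P : ℝ)) 1 X.1
    _ ≤ Real.exp (b * (K / P)) ^ K := by
        gcongr
        exact Real.add_one_le_exp _
    _ = Real.exp (b * (K ^ 2 / P)) := by
        rw [← Real.exp_nat_mul]
        ring_nf

theorem setIntegral_meets_one_add_pow_card_inter_le (hKP : K ≤ P) (X : KeyRing P K) {b : ℝ}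
    (hb : 0 ≤ b) :
    ∫ T in meets X, (1 + b) ^ (X.1 ∩ T.1).card ∂uniformKeyMeasure P K ≤
      Real.exp (b * (K ^ 2 / P)) - 1 + psf K P := by
  have := isProbabilityMeasure_uniformKeyMeasure hKP
  have hdisjoint : ∫ T in (meets X)ᶜ, (1 + b) ^ (X.1 ∩ T.1).card ∂uniformKeyMeasure P K =
      1 - psf K P := by
    have hone : Set.EqOn (fun T : KeyRing P K => (1 + b) ^ (X.1 ∩ T.1).card) 1 (meets X)ᶜ := by
      intro T hT
      simp_all [meets, Finset.not_nonempty_iff_eq_empty]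
    rw [setIntegral_congr_fun .of_discrete hone]
    simp [probReal_compl_eq_one_sub, measureReal_meets hKP X]
  have hsplit := integral_add_compl (μ := uniformKeyMeasure P K) (s := meets X) .of_discrete
    (.of_finite (f := fun T : KeyRing P K => (1 + b) ^ (X.1 ∩ T.1).card))
  linarith [integral_one_add_pow_card_inter_le hKP X hb]

end KeyRings

theorem ncard_adj_le_gDeg {V : Type*} [Finite V] (G : SimpleGraph V) (v : V) (Z : Finset V) :
    {z : Z | G.Adj v z}.ncard ≤ gDeg G v :=
  Nat.card_le_card_of_injective
    (fun z : {z : Z | G.Adj v z} => (⟨z.1, z.2⟩ : {w // G.Adj v w})) fun z z' h => by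
      simpa only [Subtype.ext_iff] using h

theorem ncard_adj_eq_gDeg {V : Type*} {G : SimpleGraph V} {v : V} {Z : Finset V}
    (h : ∀ w, G.Adj v w → w ∈ Z) : {z : Z | G.Adj v z}.ncard = gDeg G v :=
  Nat.card_congr (Equiv.subtypeSubtypeEquivSubtype (h _))

section OuterView

variable {n P K : ℕ} {p : ℝ}

theorem isProbabilityMeasure_bern (hp0 : 0 ≤ p) (hp1 : p ≤ 1) :
    IsProbabilityMeasure (bern p) := by
  refine ⟨?_⟩
  simp only [bern, Measure.add_apply, Measure.smul_apply, measure_univ, smul_eq_mul, mul_one]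
  rw [← ENNReal.ofReal_add hp0 (by linarith), add_sub_cancel, ENNReal.ofReal_one]

theorem measureReal_bern_true (hp0 : 0 ≤ p) : (bern p).real {true} = p := by
  simp [bern, Measure.real, hp0]

/-- The joint law of the key ring of a node and of its channels to two given nodes. -/
def linkMeasure (P K : ℕ) (p : ℝ) : Measure (KeyRing P K × Bool × Bool) :=
  (uniformKeyMeasure P K).prod ((bern p).prod (bern p))

theorem isProbabilityMeasure_linkMeasure (hKP : K ≤ P) (hp0 : 0 ≤ p) (hp1 : p ≤ 1) :
    IsProbabilityMeasure (linkMeasure P K p) := by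
  have := isProbabilityMeasure_uniformKeyMeasure hKP
  have := isProbabilityMeasure_bern hp0 hp1
  unfold linkMeasure
  infer_instance

theorem isProbabilityMeasure_gonMeasure (hKP : K ≤ P) (hp0 : 0 ≤ p) (hp1 : p ≤ 1) :
    IsProbabilityMeasure (gonMeasure n K P p) := by
  have := isProbabilityMeasure_uniformKeyMeasure hKP
  have := isProbabilityMeasure_bern hp0 hp1
  unfold gonMeasure
  infer_instance

/-- The joint law of the key rings of two nodes and of the states, towards these two, of further
nodes indexed by `ι`. -/
def viewMeasure (ι : Type*) [Fintype ι] (P K : ℕ) (p : ℝ) :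
    Measure ((KeyRing P K × KeyRing P K) × (ι → KeyRing P K × Bool × Bool)) :=
  ((uniformKeyMeasure P K).prod (uniformKeyMeasure P K)).prod
    (Measure.pi fun _ => linkMeasure P K p)

/-- The configuration seen from the nodes `x` and `y`: their key rings, and for every other node
its key ring together with its channels to `x` and `y`. -/
def outerView (x y : Fin n) (ω : GonSpace n K P) :
    (KeyRing P K × KeyRing P K) × (({x, y}ᶜ : Finset (Fin n)) → KeyRing P K × Bool × Bool) :=
  ((ω.1 x, ω.1 y), fun z => (ω.1 z, ω.2 s(x, z), ω.2 s(y, z)))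

theorem measurePreserving_outerView (hKP : K ≤ P) (hp0 : 0 ≤ p) (hp1 : p ≤ 1) {x y : Fin n}
    (hxy : x ≠ y) :
    MeasurePreserving (outerView x y) (gonMeasure n K P p)
      (viewMeasure ({x, y}ᶜ : Finset (Fin n)) P K p) := by
  have := isProbabilityMeasure_uniformKeyMeasure hKP
  have := isProbabilityMeasure_bern hp0 hp1
  exact ((MeasurePreserving.id _).prod
      (measurePreserving_arrowProdEquivProdArrow (KeyRing P K) (Bool × Bool) _
        (fun _ => uniformKeyMeasure P K) fun _ => (bern p).prod (bern p)).symm).comp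
    ((measurePreserving_prodAssoc _ _ _).comp
      ((measurePreserving_pi_pair_compl (uniformKeyMeasure P K) hxy).prod
        (measurePreserving_pi_sym2_star (bern p) hxy)))

/-- The states of an outer node that link it to the first node, whose key ring is `X`. -/
def linkedFst (X : KeyRing P K) : Set (KeyRing P K × Bool × Bool) :=
  meets X ×ˢ {true} ×ˢ Set.univ

/-- The states of an outer node that link it to the second node, whose key ring is `Y`. -/
def linkedSnd (Y : KeyRing P K) : Set (KeyRing P K × Bool × Bool) :=
  meets Y ×ˢ Set.univ ×ˢ {true}

theorem measureReal_linkedFst (hKP : K ≤ P) (hp0 : 0 ≤ p) (hp1 : p ≤ 1) (X : KeyRing P K) :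
    (linkMeasure P K p).real (linkedFst X) = pef K P p := by
  have := isProbabilityMeasure_bern hp0 hp1
  rw [linkMeasure, linkedFst, measureReal_prod_prod, measureReal_prod_prod,
    measureReal_meets hKP, measureReal_bern_true hp0, probReal_univ, mul_one, pef, mul_comm]

theorem measureReal_linkedSnd (hKP : K ≤ P) (hp0 : 0 ≤ p) (hp1 : p ≤ 1) (Y : KeyRing P K) :
    (linkMeasure P K p).real (linkedSnd Y) = pef K P p := by
  have := isProbabilityMeasure_bern hp0 hp1
  rw [linkMeasure, linkedSnd, measureReal_prod_prod, measureReal_prod_prod,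
    measureReal_meets hKP, measureReal_bern_true hp0, probReal_univ, one_mul, pef, mul_comm]

theorem measureReal_linkedFst_inter_linkedSnd_le (hKP : K ≤ P) (hp0 : 0 ≤ p)
    (X Y : KeyRing P K) :
    (linkMeasure P K p).real (linkedFst X ∩ linkedSnd Y) ≤
      p ^ 2 * (((K : ℝ) ^ 2 / P) ^ 2 + (X.1 ∩ Y.1).card * (K / P)) := by
  rw [linkMeasure, linkedFst, linkedSnd, Set.prod_inter_prod, Set.prod_inter_prod, Set.inter_univ,
    Set.univ_inter, measureReal_prod_prod, measureReal_prod_prod, measureReal_bern_true hp0,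
    mul_comm, ← sq]
  gcongr
  exact measureReal_meets_inter_meets_le hKP X Y

theorem gonGraph_adj_fst_iff {ω : GonSpace n K P} {x y : Fin n}
    (z : ({x, y}ᶜ : Finset (Fin n))) :
    (gonGraph ω).Adj x z ↔ (outerView x y ω).2 z ∈ linkedFst (outerView x y ω).1.1 := by
  have hz : x ≠ z ∧ y ≠ z := by simpa [eq_comm] using z.2
  simp [gonGraph, outerView, linkedFst, meets, hz.1]

theorem gonGraph_adj_snd_iff {ω : GonSpace n K P} {x y : Fin n}
    (z : ({x, y}ᶜ : Finset (Fin n))) :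
    (gonGraph ω).Adj y z ↔ (outerView x y ω).2 z ∈ linkedSnd (outerView x y ω).1.2 := by
  have hz : x ≠ z ∧ y ≠ z := by simpa [eq_comm] using z.2
  simp [gonGraph, outerView, linkedSnd, meets, hz.2]

end OuterView

/-- A bound for `E[exp (lam * |X ∩ T|); X ∩ T ≠ ∅]`, where `T` is a random key ring. -/
def meetWeight (P K : ℕ) (lam : ℝ) : ℝ :=
  Real.exp (Real.exp lam * (K ^ 2 / P)) - 1 + psf K P

theorem meetWeight_mono (P K : ℕ) : Monotone (meetWeight P K) := fun lam lam' h => by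
  unfold meetWeight
  gcongr

theorem meetWeight_nonneg (P K : ℕ) (lam : ℝ) : 0 ≤ meetWeight P K lam :=
  add_nonneg (sub_nonneg.mpr (Real.one_le_exp (by positivity))) (psf_nonneg K P)

section JointDegrees

variable {n P K : ℕ} {p : ℝ}

theorem setIntegral_meets_exp_card_inter_le (hKP : K ≤ P) (X : KeyRing P K) (lam : ℝ) :
    ∫ T in meets X, Real.exp (lam * (X.1 ∩ T.1).card) ∂uniformKeyMeasure P K ≤
      meetWeight P K lam := by
  have := isProbabilityMeasure_uniformKeyMeasure hKP
  refine (integral_mono .of_finite .of_finite fun T => ?_).trans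
    (setIntegral_meets_one_add_pow_card_inter_le hKP X (Real.exp_pos lam).le)
  change Real.exp (lam * (X.1 ∩ T.1).card) ≤ (1 + Real.exp lam) ^ (X.1 ∩ T.1).card
  rw [mul_comm, Real.exp_nat_mul]
  gcongr
  linarith

theorem measureReal_prod_meets (hKP : K ≤ P) :
    ((uniformKeyMeasure P K).prod (uniformKeyMeasure P K)).real {XY | XY.2 ∈ meets XY.1} =
      psf K P := by
  have := isProbabilityMeasure_uniformKeyMeasure hKP
  rw [measureReal_prod_eq_integral _ _ .of_discrete]
  simp [measureReal_meets hKP]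

theorem measureReal_ncard_linked_le_le (hKP : K ≤ P) (hp0 : 0 ≤ p) (hp1 : p ≤ 1)
    (hps : psf K P ≤ 1 / 4) {ι : Type*} [Fintype ι] (hsq : Fintype.card ι * pef K P p ^ 2 ≤ 1)
    (X Y : KeyRing P K) (ℓ : ℕ) :
    (Measure.pi fun _ : ι => linkMeasure P K p).real
        {f | {i | f i ∈ linkedFst X}.ncard ≤ ℓ ∧ {i | f i ∈ linkedSnd Y}.ncard ≤ ℓ} ≤
      (1 + 2 * (Fintype.card ι * pef K P p)) ^ (2 * ℓ) *
        Real.exp (3 - 2 * (Fintype.card ι * pef K P p)) *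
          Real.exp (Fintype.card ι * p ^ 2 * (K / P) * (X.1 ∩ Y.1).card) := by
  have := isProbabilityMeasure_linkMeasure hKP hp0 hp1
  have hbound := measureReal_ncard_le_le_le_exp (ι := ι) (linkMeasure P K p)
    (U := linkedFst X) (V := linkedSnd Y) .of_discrete .of_discrete ℓ ℓ
  rw [measureReal_linkedFst hKP hp0 hp1, measureReal_linkedSnd hKP hp0 hp1, ← two_mul ℓ,
    ← two_mul (pef K P p), mul_left_comm] at hbound
  have hring : Fintype.card ι * p ^ 2 * ((K : ℝ) ^ 2 / P) ^ 2 ≤ 2 :=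
    calc Fintype.card ι * p ^ 2 * ((K : ℝ) ^ 2 / P) ^ 2
        ≤ Fintype.card ι * p ^ 2 * (4 / 3 * psf K P) ^ 2 := by
          gcongr
          exact sq_div_le_four_thirds_mul_psf hps
      _ = 16 / 9 * (Fintype.card ι * pef K P p ^ 2) := by rw [pef]; ring
      _ ≤ 2 := by linarith
  have hinter : Fintype.card ι * (linkMeasure P K p).real (linkedFst X ∩ linkedSnd Y) ≤
      2 + Fintype.card ι * p ^ 2 * (K / P) * (X.1 ∩ Y.1).card := by
    grw [measureReal_linkedFst_inter_linkedSnd_le hKP hp0 X Y, ← hring]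
    exact le_of_eq (by ring)
  have := pef_nonneg K P hp0
  grw [hbound, hinter]
  rw [mul_assoc (_ ^ _), ← Real.exp_add]
  exact le_of_eq (by ring_nf)

theorem measureReal_linkedFst_inter_linkedSnd_le_half (hKP : K ≤ P) (hp0 : 0 ≤ p) (hp1 : p ≤ 1)
    (hps : psf K P ≤ 1 / 4) {X Y : KeyRing P K} (hXY : Y ∉ meets X) :
    (linkMeasure P K p).real (linkedFst X ∩ linkedSnd Y) ≤ pef K P p / 2 := by
  have hcard : (X.1 ∩ Y.1).card = 0 :=
    Finset.card_eq_zero.mpr (Finset.not_nonempty_iff_eq_empty.mp hXY)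
  have hps0 := psf_nonneg K P
  calc (linkMeasure P K p).real (linkedFst X ∩ linkedSnd Y)
      ≤ p ^ 2 * ((K : ℝ) ^ 2 / P) ^ 2 := by
        simpa [hcard] using measureReal_linkedFst_inter_linkedSnd_le hKP hp0 X Y
    _ ≤ p ^ 1 * (4 / 3 * psf K P) ^ 2 := by
        gcongr ?_ * ?_ ^ 2
        exacts [pow_le_pow_of_le_one hp0 hp1 one_le_two, sq_div_le_four_thirds_mul_psf hps]
    _ = p * psf K P * (16 / 9 * psf K P) := by ring
    _ ≤ p * psf K P * (1 / 2) := by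
        gcongr
        linarith
    _ = pef K P p / 2 := by rw [pef]; ring

theorem le_measureReal_ncard_linked_eq (hKP : K ≤ P) (hp0 : 0 ≤ p) (hp1 : p ≤ 1)
    (hps : psf K P ≤ 1 / 4) {ι : Type*} [Fintype ι] (hsq : Fintype.card ι * pef K P p ^ 2 ≤ 1)
    {X Y : KeyRing P K} (hXY : Y ∉ meets X) {ℓ : ℕ} (hℓ : 4 * ℓ ≤ Fintype.card ι) :
    (Fintype.card ι * pef K P p / 4) ^ (2 * ℓ) / (ℓ.factorial : ℝ) ^ 2 *
        Real.exp (-8 - 2 * (Fintype.card ι * pef K P p)) ≤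
      (Measure.pi fun _ : ι => linkMeasure P K p).real
        {f | {i | f i ∈ linkedFst X}.ncard = ℓ ∧ {i | f i ∈ linkedSnd Y}.ncard = ℓ} := by
  have := isProbabilityMeasure_linkMeasure hKP hp0 hp1
  have hX := measureReal_linkedFst hKP hp0 hp1 X
  have hY := measureReal_linkedSnd hKP hp0 hp1 Y
  have hXY := measureReal_linkedFst_inter_linkedSnd_le_half hKP hp0 hp1 hps hXY
  have hpe : pef K P p ≤ 1 / 4 := (mul_le_of_le_one_left (psf_nonneg K P) hp1).trans hps
  refine pow_div_mul_exp_le_measureReal_ncard_eq _ .of_discrete .of_discrete (pef_nonneg K P hp0)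
    hpe hsq hX.le hY.le ?_ ?_ hℓ
  · have := measureReal_inter_add_sdiff (μ := linkMeasure P K p) (s := linkedFst X)
      (t := linkedSnd Y) .of_discrete
    linarith
  · have := measureReal_inter_add_sdiff (μ := linkMeasure P K p) (s := linkedSnd Y)
      (t := linkedFst X) .of_discrete
    rw [Set.inter_comm] at this
    linarith

theorem mem_degEvent_iff {ω : GonSpace n K P} {x : Fin n} {ℓ : ℕ} :
    ω ∈ degEvent n K P x ℓ ↔ gDeg (gonGraph ω) x = ℓ := by
  simp [degEvent]

theorem mem_edgeEvent_iff {ω : GonSpace n K P} {x y : Fin n} :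
    ω ∈ edgeEvent n K P x y ↔ (gonGraph ω).Adj x y := by
  simp [edgeEvent]

theorem degEvent_inter_edgeEvent_subset {x y : Fin n} (ℓ : ℕ) :
    degEvent n K P x ℓ ∩ degEvent n K P y ℓ ∩ edgeEvent n K P x y ⊆ outerView x y ⁻¹'
      {v | v.1.2 ∈ meets v.1.1 ∧ {z | v.2 z ∈ linkedFst v.1.1}.ncard ≤ ℓ ∧
        {z | v.2 z ∈ linkedSnd v.1.2}.ncard ≤ ℓ} := by
  rintro ω ⟨⟨hx, hy⟩, hxy⟩
  simp only [Set.mem_preimage, Set.mem_ofPred_eq, ← gonGraph_adj_fst_iff, ← gonGraph_adj_snd_iff]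
  refine ⟨(mem_edgeEvent_iff.mp hxy).2.1, ?_, ?_⟩
  · rw [← mem_degEvent_iff.mp hx]
    exact ncard_adj_le_gDeg _ _ _
  · rw [← mem_degEvent_iff.mp hy]
    exact ncard_adj_le_gDeg _ _ _

theorem subset_degEvent_inter_compl_edgeEvent {x y : Fin n} (ℓ : ℕ) :
    outerView x y ⁻¹'
      {v | v.1.2 ∉ meets v.1.1 ∧ {z | v.2 z ∈ linkedFst v.1.1}.ncard = ℓ ∧
        {z | v.2 z ∈ linkedSnd v.1.2}.ncard = ℓ} ⊆
      degEvent n K P x ℓ ∩ degEvent n K P y ℓ ∩ (edgeEvent n K P x y)ᶜ := by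
  rintro ω ⟨hmeets, hx, hy⟩
  simp only [← gonGraph_adj_fst_iff, ← gonGraph_adj_snd_iff] at hx hy
  have hadj : ¬(gonGraph ω).Adj x y := fun h => hmeets h.2.1
  refine ⟨⟨?_, ?_⟩, mem_edgeEvent_iff.not.mpr hadj⟩
  · rw [mem_degEvent_iff, ← hx, ncard_adj_eq_gDeg]
    rintro w hw
    simpa using ⟨hw.ne', fun h => hadj (h ▸ hw)⟩
  · rw [mem_degEvent_iff, ← hy, ncard_adj_eq_gDeg]
    rintro w hw
    simpa using ⟨fun h => hadj (h ▸ hw.symm), hw.ne'⟩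

theorem measureReal_viewMeasure_meets_le (hKP : K ≤ P) (hp0 : 0 ≤ p) (hp1 : p ≤ 1)
    (hps : psf K P ≤ 1 / 4) {ι : Type*} [Fintype ι] (hsq : Fintype.card ι * pef K P p ^ 2 ≤ 1)
    (ℓ : ℕ) :
    (viewMeasure ι P K p).real {v | v.1.2 ∈ meets v.1.1 ∧
        {i | v.2 i ∈ linkedFst v.1.1}.ncard ≤ ℓ ∧ {i | v.2 i ∈ linkedSnd v.1.2}.ncard ≤ ℓ} ≤
      (1 + 2 * (Fintype.card ι * pef K P p)) ^ (2 * ℓ) *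
        Real.exp (3 - 2 * (Fintype.card ι * pef K P p)) *
          meetWeight P K (Fintype.card ι * p ^ 2 * (K / P)) := by
  have := isProbabilityMeasure_uniformKeyMeasure hKP
  have := isProbabilityMeasure_linkMeasure hKP hp0 hp1
  have hpe := pef_nonneg K P hp0
  set B := (1 + 2 * (Fintype.card ι * pef K P p)) ^ (2 * ℓ) *
    Real.exp (3 - 2 * (Fintype.card ι * pef K P p)) with hBdef
  have hB : 0 ≤ B := by positivity
  set lam := Fintype.card ι * p ^ 2 * ((K : ℝ) / P) with hlam
  let w : KeyRing P K × KeyRing P K → ℝ := fun XY => B * Real.exp (lam * (XY.1.1 ∩ XY.2.1).card)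
  calc _ ≤ ∫ XY, Set.indicator {XY | XY.2 ∈ meets XY.1} w XY
          ∂(uniformKeyMeasure P K).prod (uniformKeyMeasure P K) := by
        rw [viewMeasure, measureReal_prod_eq_integral _ _ (Set.toFinite _).measurableSet]
        refine integral_mono .of_finite .of_finite fun XY => ?_
        by_cases h : XY.2 ∈ meets XY.1
        · simpa [h, w, hBdef, hlam] using
            measureReal_ncard_linked_le_le hKP hp0 hp1 hps hsq XY.1 XY.2 ℓ
        · simp [h]
    _ = ∫ X, B * ∫ Y in meets X, Real.exp (lam * (X.1 ∩ Y.1).card)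
          ∂uniformKeyMeasure P K ∂uniformKeyMeasure P K := by
        rw [integral_indicator .of_discrete,
          setIntegral_prod_eq_integral_setIntegral .of_discrete Integrable.of_finite]
        simp only [w, integral_const_mul]
        rfl
    _ ≤ ∫ _, B * meetWeight P K lam ∂uniformKeyMeasure P K := by
        refine integral_mono .of_finite .of_finite fun X => ?_
        exact mul_le_mul_of_nonneg_left (setIntegral_meets_exp_card_inter_le hKP X lam) hB
    _ = B * meetWeight P K lam := by simp

theorem le_measureReal_viewMeasure_not_meets (hKP : K ≤ P) (hp0 : 0 ≤ p) (hp1 : p ≤ 1)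
    (hps : psf K P ≤ 1 / 4) {ι : Type*} [Fintype ι] (hsq : Fintype.card ι * pef K P p ^ 2 ≤ 1)
    {ℓ : ℕ} (hℓ : 4 * ℓ ≤ Fintype.card ι) :
    (1 - psf K P) * ((Fintype.card ι * pef K P p / 4) ^ (2 * ℓ) / (ℓ.factorial : ℝ) ^ 2 *
        Real.exp (-8 - 2 * (Fintype.card ι * pef K P p))) ≤
      (viewMeasure ι P K p).real {v | v.1.2 ∉ meets v.1.1 ∧
        {i | v.2 i ∈ linkedFst v.1.1}.ncard = ℓ ∧ {i | v.2 i ∈ linkedSnd v.1.2}.ncard = ℓ} := by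
  have := isProbabilityMeasure_uniformKeyMeasure hKP
  have := isProbabilityMeasure_linkMeasure hKP hp0 hp1
  set B := (Fintype.card ι * pef K P p / 4) ^ (2 * ℓ) / (ℓ.factorial : ℝ) ^ 2 *
    Real.exp (-8 - 2 * (Fintype.card ι * pef K P p)) with hBdef
  calc (1 - psf K P) * B
      = ∫ XY, Set.indicator {XY | XY.2 ∈ meets XY.1}ᶜ (fun _ => B) XY
          ∂(uniformKeyMeasure P K).prod (uniformKeyMeasure P K) := by
        rw [integral_indicator .of_discrete, setIntegral_const, smul_eq_mul,
          probReal_compl_eq_one_sub .of_discrete, measureReal_prod_meets hKP]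
    _ ≤ _ := by
        rw [viewMeasure, measureReal_prod_eq_integral _ _ (Set.toFinite _).measurableSet]
        refine integral_mono .of_finite .of_finite fun XY => ?_
        by_cases h : XY.2 ∈ meets XY.1
        · simp [h]
        · simpa [h, hBdef] using le_measureReal_ncard_linked_eq hKP hp0 hp1 hps hsq h hℓ

theorem card_compl_pair {x y : Fin n} (hxy : x ≠ y) :
    Fintype.card ({x, y}ᶜ : Finset (Fin n)) = n - 2 := by
  rw [Fintype.card_coe, Finset.card_compl, Finset.card_pair hxy, Fintype.card_fin]

theorem measureReal_degEvent_inter_edgeEvent_le (hKP : K ≤ P) (hp0 : 0 ≤ p) (hp1 : p ≤ 1)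
    (hps : psf K P ≤ 1 / 4) {x y : Fin n} (hxy : x ≠ y)
    (hsq : (n - 2 : ℕ) * pef K P p ^ 2 ≤ 1) (ℓ : ℕ) :
    (gonMeasure n K P p).real
        (degEvent n K P x ℓ ∩ degEvent n K P y ℓ ∩ edgeEvent n K P x y) ≤
      (1 + 2 * ((n - 2 : ℕ) * pef K P p)) ^ (2 * ℓ) *
        Real.exp (3 - 2 * ((n - 2 : ℕ) * pef K P p)) *
          meetWeight P K ((n - 2 : ℕ) * p ^ 2 * (K / P)) := by
  have hview := measurePreserving_outerView hKP hp0 hp1 hxy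
  have := isProbabilityMeasure_gonMeasure (n := n) hKP hp0 hp1
  rw [← card_compl_pair hxy] at hsq ⊢
  refine le_trans ?_ (measureReal_viewMeasure_meets_le hKP hp0 hp1 hps hsq ℓ)
  rw [← hview.measureReal_preimage (Set.toFinite _).measurableSet.nullMeasurableSet]
  exact measureReal_mono (degEvent_inter_edgeEvent_subset ℓ)

theorem le_measureReal_degEvent_inter_compl_edgeEvent (hKP : K ≤ P) (hp0 : 0 ≤ p) (hp1 : p ≤ 1)
    (hps : psf K P ≤ 1 / 4) {x y : Fin n} (hxy : x ≠ y)
    (hsq : (n - 2 : ℕ) * pef K P p ^ 2 ≤ 1) {ℓ : ℕ} (hℓ : 4 * ℓ ≤ n - 2) :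
    (1 - psf K P) * (((n - 2 : ℕ) * pef K P p / 4) ^ (2 * ℓ) / (ℓ.factorial : ℝ) ^ 2 *
        Real.exp (-8 - 2 * ((n - 2 : ℕ) * pef K P p))) ≤
      (gonMeasure n K P p).real
        (degEvent n K P x ℓ ∩ degEvent n K P y ℓ ∩ (edgeEvent n K P x y)ᶜ) := by
  have hview := measurePreserving_outerView hKP hp0 hp1 hxy
  have := isProbabilityMeasure_gonMeasure (n := n) hKP hp0 hp1
  rw [← card_compl_pair hxy] at hsq hℓ ⊢
  refine (le_measureReal_viewMeasure_not_meets hKP hp0 hp1 hps hsq hℓ).trans ?_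
  rw [← hview.measureReal_preimage (Set.toFinite _).measurableSet.nullMeasurableSet]
  exact measureReal_mono (subset_degEvent_inter_compl_edgeEvent ℓ)

theorem one_add_pow_mul_exp_le {ε b : ℝ} (hε : 0 < ε) (hb : ε ≤ 2 * b) (ℓ : ℕ) :
    (1 + 2 * b) ^ (2 * ℓ) * Real.exp (3 - 2 * b) ≤
      (8 / ε + 8) ^ (2 * ℓ) * (ℓ.factorial : ℝ) ^ 2 * Real.exp 11 *
        ((b / 4) ^ (2 * ℓ) / (ℓ.factorial : ℝ) ^ 2 * Real.exp (-8 - 2 * b)) := by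
  have hb0 : 0 < b := by linarith
  have hbase : 1 + 2 * b ≤ (8 / ε + 8) * (b / 4) := by
    have : 1 ≤ 2 * b / ε := (one_le_div hε).mpr hb
    linear_combination this
  have hexp : Real.exp (3 - 2 * b) = Real.exp 11 * Real.exp (-8 - 2 * b) := by
    rw [← Real.exp_add]
    ring_nf
  have hfac : (ℓ.factorial : ℝ) ≠ 0 := by positivity
  grw [hbase]
  rw [mul_pow, hexp]
  exact le_of_eq (by field_simp)

theorem measureReal_edgeEvent_div_compl_edgeEvent_le (hKP : K ≤ P) (hp0 : 0 ≤ p) (hp1 : p ≤ 1)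
    (hps : psf K P ≤ 1 / 4) {x y : Fin n} (hxy : x ≠ y) (hsq : n * pef K P p ^ 2 ≤ 1) {ℓ : ℕ}
    (hn : 4 * ℓ + 4 ≤ n) {ε : ℝ} (hε : 0 < ε) (hdeg : ε ≤ n * pef K P p) :
    (gonMeasure n K P p).real
          (degEvent n K P x ℓ ∩ degEvent n K P y ℓ ∩ edgeEvent n K P x y) /
        (gonMeasure n K P p).real
          (degEvent n K P x ℓ ∩ degEvent n K P y ℓ ∩ (edgeEvent n K P x y)ᶜ) ≤
      4 / 3 * (8 / ε + 8) ^ (2 * ℓ) * (ℓ.factorial : ℝ) ^ 2 * Real.exp 11 *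
        meetWeight P K (n * p ^ 2 * (K / P)) := by
  have hNn : ((n - 2 : ℕ) : ℝ) ≤ n := by exact_mod_cast n.sub_le 2
  have hhalf : (n : ℝ) / 2 ≤ (n - 2 : ℕ) := by
    have : (4 : ℝ) ≤ n := by exact_mod_cast (by omega : 4 ≤ n)
    push_cast [Nat.cast_sub (by omega : 2 ≤ n)]
    linarith
  have hpe := pef_nonneg K P hp0
  have hsq' : (n - 2 : ℕ) * pef K P p ^ 2 ≤ 1 := le_trans (by gcongr) hsq
  have hedge := measureReal_degEvent_inter_edgeEvent_le hKP hp0 hp1 hps hxy hsq' ℓ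
  have hnonedge := le_measureReal_degEvent_inter_compl_edgeEvent hKP hp0 hp1 hps hxy hsq'
    (by omega : 4 * ℓ ≤ n - 2)
  set b := (n - 2 : ℕ) * pef K P p
  have hb : ε ≤ 2 * b :=
    calc ε ≤ 2 * (n / 2 * pef K P p) := by linarith
      _ ≤ 2 * ((n - 2 : ℕ) * pef K P p) := by gcongr
  have hpow := one_add_pow_mul_exp_le hε hb ℓ
  set B := (b / 4) ^ (2 * ℓ) / (ℓ.factorial : ℝ) ^ 2 * Real.exp (-8 - 2 * b)
  have hW : meetWeight P K ((n - 2 : ℕ) * p ^ 2 * (K / P)) ≤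
      meetWeight P K (n * p ^ 2 * (K / P)) := meetWeight_mono P K (by gcongr)
  have hW0 := meetWeight_nonneg P K (n * p ^ 2 * ((K : ℝ) / P))
  set W := meetWeight P K (n * p ^ 2 * (K / P))
  refine div_le_of_le_mul₀ measureReal_nonneg (by positivity) (hedge.trans ?_)
  have hnonedge' : 3 / 4 * B ≤ (gonMeasure n K P p).real
      (degEvent n K P x ℓ ∩ degEvent n K P y ℓ ∩ (edgeEvent n K P x y)ᶜ) :=
    le_trans (mul_le_mul_of_nonneg_right (by linarith) (by positivity)) hnonedge
  grw [hW, hpow, ← hnonedge']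
  exact le_of_eq (by ring)

end JointDegrees

theorem exp_mul_mul_le_add {L p q ρ c : ℝ} (hL : 0 ≤ L) (hp0 : 0 ≤ p) (hp1 : p ≤ 1) (hq : 0 ≤ q)
    (hρ0 : 0 ≤ ρ) (hρ1 : ρ ≤ 1) (hc : 0 ≤ c) (hle : Real.exp L * (p * q) ≤ c * L) :
    Real.exp (ρ * (p * L)) * q ≤
      Real.exp 1 * q + c * (L ^ 2 / Real.exp ((1 - ρ) * L)) := by
  rcases le_total (p * L) 1 with hpL | hpL
  · have hexp : ρ * (p * L) ≤ 1 := mul_le_one₀ hρ1 (by positivity) hpL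
    have : 0 ≤ c * (L ^ 2 / Real.exp ((1 - ρ) * L)) := by positivity
    grw [hexp, ← this, add_zero]
  · have hLq : Real.exp L * q ≤ c * L ^ 2 :=
      calc Real.exp L * q ≤ Real.exp L * q * (p * L) := le_mul_of_one_le_right (by positivity) hpL
        _ = Real.exp L * (p * q) * L := by ring
        _ ≤ c * L * L := by gcongr
        _ = c * L ^ 2 := by ring
    calc Real.exp (ρ * (p * L)) * q ≤ Real.exp (ρ * L) * q := by
          gcongr
          exact mul_le_of_le_one_left hL hp1
      _ = Real.exp L * q / Real.exp ((1 - ρ) * L) := by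
          rw [sub_mul, one_mul, Real.exp_sub]
          field_simp
      _ ≤ c * L ^ 2 / Real.exp ((1 - ρ) * L) := by gcongr
      _ ≤ Real.exp 1 * q + c * (L ^ 2 / Real.exp ((1 - ρ) * L)) := by
          rw [mul_div_assoc]
          exact le_add_of_nonneg_left (by positivity)

theorem mul_sq_mul_div_le_of_pef_le {K P : ℕ} {a p m c ρ L : ℝ} (hp0 : 0 ≤ p) (hm : 0 < m)
    (hK : m ≤ K) (hL : 0 ≤ L) (hρ : 0 ≤ ρ) (hps : psf K P < 1) (hc : c ≤ ρ * m * (1 - psf K P))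
    (ha : 0 ≤ a) (hle : a * pef K P p ≤ c * L) : a * p ^ 2 * (K / P) ≤ ρ * (p * L) := by
  have hpos : 0 < 1 - psf K P := sub_pos.mpr hps
  refine le_of_mul_le_mul_right ?_ (hm.trans_le hK)
  calc a * p ^ 2 * (K / P) * K = a * p ^ 2 * (K ^ 2 / P) := by ring
    _ ≤ a * p ^ 2 * (psf K P / (1 - psf K P)) :=
        mul_le_mul_of_nonneg_left (sq_div_le_psf_div hps) (by positivity)
    _ = p * (a * pef K P p) / (1 - psf K P) := by rw [pef]; ring
    _ ≤ p * (ρ * m * (1 - psf K P) * L) / (1 - psf K P) := by grw [hle, hc]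
    _ = ρ * (p * L) * m := by field_simp
    _ ≤ ρ * (p * L) * K := by gcongr

section Asymptotics

variable {K P : ℕ → ℕ} {p : ℕ → ℝ} {c m : ℝ}

theorem tendsto_log_natCast_atTop : Tendsto (fun n : ℕ => Real.log n) atTop atTop :=
  Real.tendsto_log_atTop.comp tendsto_natCast_atTop_atTop

theorem tendsto_exp_mul_sq_div (hp0 : ∀ n, 0 ≤ p n) (hp1 : ∀ n, p n ≤ 1)
    (hps : Tendsto (fun n => psf (K n) (P n)) atTop (nhds 0)) (hc : 0 ≤ c) (hcm : c < m)
    (hK : ∀ᶠ n in atTop, m ≤ K n)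
    (hle : ∀ᶠ n : ℕ in atTop, n * pef (K n) (P n) (p n) ≤ c * Real.log n) :
    Tendsto (fun n : ℕ => Real.exp (n * p n ^ 2 * ((K n : ℝ) / P n)) * ((K n : ℝ) ^ 2 / P n))
      atTop (nhds 0) := by
  have hm : 0 < m := hc.trans_lt hcm
  obtain ⟨ρ, hρ, hρ1⟩ := exists_between ((div_lt_one hm).mpr hcm)
  have hρ0 : 0 < ρ := (div_nonneg hc hm.le).trans_lt hρ
  rw [div_lt_iff₀ hm] at hρ
  have hgap : ∀ᶠ n in atTop, c ≤ ρ * m * (1 - psf (K n) (P n)) := by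
    have hlim := (hps.const_sub 1).const_mul (ρ * m)
    rw [sub_zero, mul_one] at hlim
    exact hlim.eventually_const_le hρ
  have hlim : Tendsto (fun n : ℕ => 4 / 3 * (Real.exp 1 * psf (K n) (P n) +
      c * (Real.log n ^ 2 / Real.exp ((1 - ρ) * Real.log n)))) atTop (nhds 0) := by
    have hlog := (isLittleO_pow_exp_pos_mul_atTop 2
      (sub_pos.mpr hρ1)).tendsto_div_nhds_zero.comp tendsto_log_natCast_atTop
    simpa using ((hps.const_mul (Real.exp 1)).add (hlog.const_mul c)).const_mul (4 / 3)
  refine tendsto_of_tendsto_of_tendsto_of_le_of_le' tendsto_const_nhds hlim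
    (.of_forall fun n => by positivity) ?_
  filter_upwards [hK, hle, hgap, hps.eventually_le_const (by norm_num : (0 : ℝ) < 1 / 4),
    eventually_ge_atTop 1] with n hK hle hgap hps hn
  have hL : 0 ≤ Real.log n := Real.log_natCast_nonneg n
  calc Real.exp (n * p n ^ 2 * (K n / P n)) * (K n ^ 2 / P n)
      ≤ Real.exp (ρ * (p n * Real.log n)) * (4 / 3 * psf (K n) (P n)) := by
        gcongr Real.exp ?_ * ?_
        · exact mul_sq_mul_div_le_of_pef_le (hp0 n) hm hK hL hρ0.le (by linarith) hgap
            n.cast_nonneg hle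
        · exact sq_div_le_four_thirds_mul_psf hps
    _ = 4 / 3 * (Real.exp (ρ * (p n * Real.log n)) * psf (K n) (P n)) := by ring
    _ ≤ _ := by
        gcongr
        refine exp_mul_mul_le_add hL (hp0 n) (hp1 n) (psf_nonneg _ _) hρ0.le hρ1.le hc ?_
        rwa [Real.exp_log (by positivity)]

theorem tendsto_meetWeight (hp0 : ∀ n, 0 ≤ p n) (hp1 : ∀ n, p n ≤ 1)
    (hps : Tendsto (fun n => psf (K n) (P n)) atTop (nhds 0)) (hc : 0 ≤ c) (hcm : c < m)
    (hK : ∀ᶠ n in atTop, m ≤ K n)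
    (hle : ∀ᶠ n : ℕ in atTop, n * pef (K n) (P n) (p n) ≤ c * Real.log n) :
    Tendsto (fun n : ℕ => meetWeight (P n) (K n) (n * p n ^ 2 * ((K n : ℝ) / P n)))
      atTop (nhds 0) := by
  have hexp := (tendsto_exp_mul_sq_div hp0 hp1 hps hc hcm hK hle).rexp
  simpa [meetWeight] using (hexp.sub_const 1).add hps

theorem eventually_mul_sq_le_one {a : ℕ → ℝ} (ha : ∀ n, 0 ≤ a n)
    (hle : ∀ᶠ n : ℕ in atTop, n * a n ≤ c * Real.log n) :
    ∀ᶠ n : ℕ in atTop, n * a n ^ 2 ≤ 1 := by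
  have hlog := ((Real.isLittleO_pow_log_id_atTop (n := 2)).tendsto_div_nhds_zero.comp
    tendsto_natCast_atTop_atTop).const_mul (c ^ 2)
  rw [mul_zero] at hlog
  filter_upwards [hle, hlog.eventually_le_const zero_lt_one, eventually_ge_atTop 1]
    with n hle hlog hn
  calc n * a n ^ 2 = (n * a n) ^ 2 / n := by field_simp
    _ ≤ (c * Real.log n) ^ 2 / n := by
        have := ha n
        gcongr
    _ = c ^ 2 * (Real.log n ^ 2 / n) := by ring
    _ ≤ 1 := hlog

theorem eventually_log_add_le (b : ℝ) (hc : 1 < c) {α : ℕ → ℝ} (hα : Tendsto α atTop atBot) :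
    ∀ᶠ n : ℕ in atTop, Real.log n + b * Real.log (Real.log n) + α n ≤ c * Real.log n := by
  have hlog := ((Real.isLittleO_log_id_atTop.const_mul_left b).comp_tendsto
    tendsto_log_natCast_atTop).bound (sub_pos.mpr hc)
  filter_upwards [hlog, hα.eventually_le_atBot 0] with n hlog hα
  have hnorm := (Real.le_norm_self _).trans hlog
  simp only [Function.comp, id, Real.norm_of_nonneg (Real.log_natCast_nonneg n)] at hnorm
  linarith

end Asymptotics

theorem gon_joint_degree_edge_negligible_general {K P : ℕ → ℕ} {p : ℕ → ℝ}
    (hKP : ∀ n, K n ≤ P n) (hp0 : ∀ n, 0 ≤ p n) (hp1 : ∀ n, p n ≤ 1)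
    (hps : Tendsto (fun n : ℕ => psf (K n) (P n)) atTop (nhds 0)) {c m : ℝ} (hcm : c < m)
    (hK : ∀ᶠ n in atTop, m ≤ K n)
    (hle : ∀ᶠ n : ℕ in atTop, n * pef (K n) (P n) (p n) ≤ c * Real.log n)
    {ε : ℝ} (hε : 0 < ε) (hdeg : ∀ᶠ n : ℕ in atTop, ε ≤ n * pef (K n) (P n) (p n))
    (ℓ : ℕ) {x y : ℕ} (hxy : x ≠ y) :
    Tendsto (fun n : ℕ =>
        (gonMeasure n (K n) (P n) (p n)).real
            (degEvent n (K n) (P n) x ℓ ∩ degEvent n (K n) (P n) y ℓ ∩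
              edgeEvent n (K n) (P n) x y) /
          (gonMeasure n (K n) (P n) (p n)).real
            (degEvent n (K n) (P n) x ℓ ∩ degEvent n (K n) (P n) y ℓ ∩
              (edgeEvent n (K n) (P n) x y)ᶜ))
      atTop (nhds 0) := by
  have hc : 0 ≤ c := by
    obtain ⟨n, hn, hn'⟩ := (hle.and hdeg).exists
    exact (pos_of_mul_pos_left (hε.trans_le (hn'.trans hn)) (Real.log_natCast_nonneg n)).le
  have hsq := eventually_mul_sq_le_one (fun n => pef_nonneg (K n) (P n) (hp0 n)) hle
  have hlim := (tendsto_meetWeight hp0 hp1 hps hc hcm hK hle).const_mul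
    (4 / 3 * (8 / ε + 8) ^ (2 * ℓ) * (ℓ.factorial : ℝ) ^ 2 * Real.exp 11)
  rw [mul_zero] at hlim
  refine tendsto_of_tendsto_of_tendsto_of_le_of_le' tendsto_const_nhds hlim
    (.of_forall fun n => by positivity) ?_
  filter_upwards [hsq, hdeg, hps.eventually_le_const (by norm_num : (0 : ℝ) < 1 / 4),
    eventually_ge_atTop (4 * ℓ + 4), eventually_gt_atTop x, eventually_gt_atTop y]
    with n hsq hdeg hps hn hx hy
  exact measureReal_edgeEvent_div_compl_edgeEvent_le (hKP n) (hp0 n) (hp1 n) hps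
    (x := ⟨x, hx⟩) (y := ⟨y, hy⟩) (by simpa using hxy) hsq hn hε hdeg

/-- the adjacent case is negligible compared to the non-adjacent
case. -/
theorem gon_joint_degree_edge_negligible
    (k : ℕ) (hk : 1 ≤ k) (K P : ℕ → ℕ) (p : ℕ → ℝ)
    (hKP : ∀ n, K n ≤ P n) (hp0 : ∀ n, 0 < p n) (hp1 : ∀ n, p n < 1)
    (hps : Tendsto (fun n : ℕ => psf (K n) (P n)) atTop (nhds 0))
    (hK2 : ∀ᶠ n : ℕ in atTop, 2 ≤ K n)
    (α : ℕ → ℝ)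
    (hα : ∀ n : ℕ, 1 ≤ n → pef (K n) (P n) (p n) =
      (Real.log n + ((k : ℝ) - 1) * Real.log (Real.log n) + α n) / (n : ℝ))
    (hαbot : Tendsto α atTop atBot)
    (hdeg : ∃ ε : ℝ, 0 < ε ∧ ∀ᶠ n : ℕ in atTop, ε < (n : ℝ) * pef (K n) (P n) (p n))
    (ℓ : ℕ) (hℓ : 1 ≤ ℓ) (x y : ℕ) (hxy : x ≠ y) :
    Tendsto (fun n : ℕ =>
        (gonMeasure n (K n) (P n) (p n)
            (degEvent n (K n) (P n) x ℓ ∩ degEvent n (K n) (P n) y ℓ ∩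
              edgeEvent n (K n) (P n) x y)).toReal /
          (gonMeasure n (K n) (P n) (p n)
            (degEvent n (K n) (P n) x ℓ ∩ degEvent n (K n) (P n) y ℓ ∩
              (edgeEvent n (K n) (P n) x y)ᶜ)).toReal)
      atTop (nhds 0) := by
  obtain ⟨ε, hε, hdeg⟩ := hdeg
  have hle : ∀ᶠ n : ℕ in atTop, n * pef (K n) (P n) (p n) ≤ 3 / 2 * Real.log n := by
    filter_upwards [eventually_log_add_le ((k : ℝ) - 1) (by norm_num : (1 : ℝ) < 3 / 2) hαbot,
      eventually_ge_atTop 1] with n h hn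
    rwa [hα n hn, mul_div_cancel₀ _ (by positivity)]
  exact gon_joint_degree_edge_negligible_general hKP (fun n => (hp0 n).le) (fun n => (hp1 n).le)
    hps (by norm_num : (3 / 2 : ℝ) < 2) (hK2.mono fun n hn => by exact_mod_cast hn) hle hε
    (hdeg.mono fun n hn => hn.le) ℓ hxy
end
end
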